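/- arXiv:1406.7126 — 5 statements merged into one kernel-verified Lean document; each statement's English description precedes it below -/
import Mathlib

section
/- Let η ∈ (0,1) be a constant and let p : ℕ → ℝ satisfy 0 < p(n) ≤ 1 − η and log(1/p(n))/log n → 0 as n → ∞ (i.e. p(n) ≥ e^{−o(log n)}). With b(n) := 1/(1 − p(n)) and log_b(np) := log(n·p(n))/log b(n), for every constant ε > 0 the probability that the game chromatic number of the Erdős–Rényi random graph G_{n,p(n)} satisfies χ_g(G_{n,p(n)}) ≤ (1 + ε)·n/log_b(np) tends to 1 as n → ∞. -/
open MeasureTheory Filter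


abbrev EdgeIdx (n : ℕ) := {e : Sym2 (Fin n) // ¬ e.IsDiag}

noncomputable def bernoulliBool (p : ℝ) : Measure Bool :=
  ENNReal.ofReal p • Measure.dirac true + ENNReal.ofReal (1 - p) • Measure.dirac false

noncomputable def erMeasure (n : ℕ) (p : ℝ) : Measure (EdgeIdx n → Bool) :=
  Measure.pi fun _ => bernoulliBool p

def erGraph (n : ℕ) (ω : EdgeIdx n → Bool) : SimpleGraph (Fin n) where
  Adj u v := u ≠ v ∧ ∀ h : ¬ (s(u, v) : Sym2 (Fin n)).IsDiag, ω ⟨s(u, v), h⟩ = true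
  symm := by
    constructor
    rintro u v ⟨hne, h⟩
    refine ⟨hne.symm, fun hd => ?_⟩
    have hs : (s(v, u) : Sym2 (Fin n)) = s(u, v) := Sym2.eq_swap
    have hd' : ¬ (s(u, v) : Sym2 (Fin n)).IsDiag := by rw [← hs]; exact hd
    exact (congrArg ω (Subtype.ext hs)).trans (h hd')
  loopless := by constructor; rintro u ⟨h, -⟩; exact h rfl

/-- A legal move in the coloring game: color vertex `v` with color `c`. -/
def LegalMove {V : Type*} {k : ℕ} (G : SimpleGraph V)
    (f : V → Option (Fin k)) (v : V) (c : Fin k) : Prop :=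
  f v = none ∧ ∀ u, G.Adj u v → f u ≠ some c

/-- A strategy maps a partial coloring to a move (vertex, color). -/
def Strategy (V : Type*) (k : ℕ) := (V → Option (Fin k)) → V × Fin k

/-- A strategy is legal if it plays a legal move whenever one exists. -/
def Strategy.IsLegal {V : Type*} {k : ℕ} (σ : Strategy V k) (G : SimpleGraph V) : Prop :=
  ∀ f : V → Option (Fin k), (∃ v c, LegalMove G f v c) →
    LegalMove G f (σ f).1 (σ f).2

open Classical in
/-- The play of the coloring game: Maker (using `σM`) moves at even steps,
Breaker (using `σB`) at odd steps; the position freezes once no legal move exists. -/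
noncomputable def play {V : Type*} [DecidableEq V] {k : ℕ} (G : SimpleGraph V)
    (σM σB : Strategy V k) : ℕ → V → Option (Fin k)
  | 0 => fun _ => none
  | t + 1 =>
    let f := play G σM σB t
    if ∃ v c, LegalMove G f v c then
      let m := if t % 2 = 0 then σM f else σB f
      Function.update f m.1 (some m.2)
    else f

/-- Maker wins the coloring game with `k` colors on `G`. -/
def MakerWins {V : Type*} [Fintype V] [DecidableEq V] (G : SimpleGraph V) (k : ℕ) : Prop :=
  ∃ σM : Strategy V k, σM.IsLegal G ∧
    ∀ σB : Strategy V k, σB.IsLegal G →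
      ∀ v : V, play G σM σB (Fintype.card V) v ≠ none

/-- Breaker wins the coloring game with `k` colors on `G`. -/
def BreakerWins {V : Type*} [Fintype V] [DecidableEq V] (G : SimpleGraph V) (k : ℕ) : Prop :=
  ∃ σB : Strategy V k, σB.IsLegal G ∧
    ∀ σM : Strategy V k, σM.IsLegal G →
      ∃ v : V, play G σM σB (Fintype.card V) v = none

/-- The game chromatic number of `G`. -/
noncomputable def gameChromaticNumber {V : Type*} [Fintype V] [DecidableEq V]
    (G : SimpleGraph V) : ℕ :=
  sInf {k | MakerWins G k}

/-!
Call an uncolored vertex endangered if it belongs to a set of vertices whose lists of available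
colors have no more than `θ` colors per vertex. For every endangered vertex Maker reserves a box of
`θ` available colors, with the boxes pairwise disjoint; Hall's theorem provides them as long as
every other small set of vertices has more than `θ` colors per vertex. A move deletes at most one
color `c` from the lists, so it damages at most one box, and a maximal set of vertices that `c`
makes tight is served with new boxes. Maker always colors a vertex whose box has lost the most
colors. This keeps the sum of `(4 / 3) ^ h` over the uncolored vertices, with `h` the number of
losses, below the number `n` of vertices, so a box loses `O(log n)` colors and is never emptied if
`θ` is larger. The number of endangered vertices stays below `g` as soon as, for all partial
colorings, any `g` lists together contain more than `θ * g` colors.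

In `G(n, p)` with `k` colors, fix a partial coloring, a set `S` of `g` vertices and a set `X` of
`θ * g` colors. At least `m = k - θ * g - g` colors lie outside of `X` and are not used on `S`. The
list of a vertex of `S` avoids such a color `c` iff the vertex has a neighbor in the color class of
`c`. The average size of these classes is at most `n / m`, so by convexity the probability that all
lists of `S` lie in `X` is at most `exp (-g * m * (1 - p) ^ (n / m))`. For
`m ≈ (1 + ε / 2) * n / log_b (n * p)` and `g = n ^ (1 - 2 * δ)` with a small `δ` this beats the
`exp (O(n * log n))` choices in the union bound, while `θ * g = o(m)`.
-/

open scoped Finset Topology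

/-! ### Reserving boxes in a family of lists -/

section Lists

variable {V C : Type*} [DecidableEq C] {θ g : ℕ}

/-- Every `g` of the lists `A v` together contain more than `θ * g` colors. Maker wins if the lists
of available colors have this property throughout the game. -/
def IsExpanding (θ g : ℕ) (A : V → Finset C) : Prop :=
  ∀ S : Finset V, #S = g → θ * g < #(S.biUnion A)

theorem IsExpanding.pos {A : V → Finset C} (hA : IsExpanding θ g A) : 0 < g := by
  rcases Nat.eq_zero_or_pos g with rfl | hg
  · simpa using hA ∅ rfl
  · exact hg

theorem card_biUnion_le_card_biUnion_add_one {S : Finset V} {A B : V → Finset C} {c : C}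
    (hAB : ∀ v ∈ S, (A v).erase c ⊆ B v) : #(S.biUnion A) ≤ #(S.biUnion B) + 1 := by
  have hsub : (S.biUnion A).erase c ⊆ S.biUnion B := by
    rw [Finset.erase_biUnion]
    exact Finset.biUnion_mono hAB
  have := Finset.card_le_card hsub
  have := Finset.pred_card_le_card_erase (s := S.biUnion A) (a := c)
  omega

theorem exists_pairwiseDisjoint_subset_card_eq {T : Finset V} {A : V → Finset C}
    (hall : ∀ S ⊆ T, θ * #S ≤ #(S.biUnion A)) :
    ∃ Z : V → Finset C, (∀ v ∈ T, Z v ⊆ A v ∧ #(Z v) = θ) ∧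
      (T : Set V).PairwiseDisjoint Z := by
  classical
  -- Hall's theorem for `θ` copies of every vertex of `T`
  obtain ⟨φ, hinj, hφ⟩ := (Finset.all_card_le_biUnion_card_iff_exists_injective
    fun x : T × Fin θ ↦ A x.1).mp fun s ↦ by
      have hcard : #s ≤ θ * #(s.image fun x ↦ (x.1 : V)) := by
        calc #s ≤ #((s.image fun x ↦ (x.1 : V)) ×ˢ (Finset.univ : Finset (Fin θ))) :=
              Finset.card_le_card_of_injOn (fun x ↦ ((x.1 : V), x.2))
                (fun x hx ↦ Finset.mem_product.mpr
                  ⟨Finset.mem_image_of_mem _ hx, Finset.mem_univ _⟩)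
                (fun x _ y _ hxy ↦ by
                  obtain ⟨h₁, h₂⟩ := Prod.mk.inj hxy
                  exact Prod.ext (Subtype.ext h₁) h₂)
          _ = θ * #(s.image fun x ↦ (x.1 : V)) := by simp [mul_comm]
      rw [← Finset.image_biUnion (f := fun x : T × Fin θ ↦ (x.1 : V)) (t := A)]
      exact hcard.trans (hall _ (Finset.image_subset_iff.mpr fun x _ ↦ x.1.2))
  let Z : V → Finset C := fun v ↦
    if hv : v ∈ T then Finset.univ.image fun i ↦ φ (⟨v, hv⟩, i) else ∅
  have mem_Z {v : V} (hv : v ∈ T) {c : C} : c ∈ Z v ↔ ∃ i, φ (⟨v, hv⟩, i) = c := by simp [Z, hv]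
  refine ⟨Z, fun v hv ↦ ⟨fun c hc ↦ ?_, ?_⟩, fun u hu v hv huv ↦ Finset.disjoint_left.mpr ?_⟩
  · obtain ⟨i, rfl⟩ := (mem_Z hv).mp hc
    exact hφ (⟨v, hv⟩, i)
  · simp only [Z, dif_pos hv]
    rw [Finset.card_image_of_injective _ fun i j hij ↦ (Prod.ext_iff.mp (hinj hij)).2,
      Finset.card_univ, Fintype.card_fin]
  · intro c hcu hcv
    obtain ⟨i, rfl⟩ := (mem_Z hu).mp hcu
    obtain ⟨j, hj⟩ := (mem_Z hv).mp hcv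
    exact huv (congrArg (fun x ↦ (x.1 : V)) (hinj hj)).symm

variable [DecidableEq V]

theorem exists_maximal_tight (θ r : ℕ) (W : Finset V) (B : V → Finset C) :
    ∃ T ⊆ W, #T ≤ r ∧ #(T.biUnion B) ≤ θ * #T ∧
      ∀ S ⊆ W \ T, S.Nonempty → #T + #S ≤ r →
        θ * #S < #(S.biUnion fun v ↦ B v \ T.biUnion B) := by
  let tight := {T ∈ W.powerset | #T ≤ r ∧ #(T.biUnion B) ≤ θ * #T}
  obtain ⟨T, hT, hTmax⟩ := Finset.exists_max_image tight Finset.card ⟨∅, by simp [tight]⟩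
  simp only [tight, Finset.mem_filter, Finset.mem_powerset] at hT hTmax
  obtain ⟨hTW, hTr, hTB⟩ := hT
  refine ⟨T, hTW, hTr, hTB, fun S hS hSne hSr ↦ ?_⟩
  by_contra! hSB
  have hcard : #(T ∪ S) = #T + #S :=
    Finset.card_union_of_disjoint (Finset.disjoint_of_subset_right hS Finset.disjoint_sdiff)
  have hunion : (T ∪ S).biUnion B = T.biUnion B ∪ S.biUnion fun v ↦ B v \ T.biUnion B := by
    rw [Finset.union_biUnion]
    ext c
    simp only [Finset.mem_union, Finset.mem_biUnion, Finset.mem_sdiff]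
    grind
  have hle := hTmax (T ∪ S) ⟨Finset.union_subset hTW (hS.trans Finset.sdiff_subset),
    hcard ▸ hSr, by
      rw [hunion, hcard, mul_add]
      exact (Finset.card_union_le _ _).trans (add_le_add hTB hSB)⟩
  have := hSne.card_pos
  omega

/-- A state of Maker's box game. The vertices in `U` are uncolored and the lists `A v` consist of
their available colors. All lists of the vertices in `E`, the endangered ones, are contained in the
small set `X`, and every uncolored vertex `v` of `E` owns a box `Z v` of at least `θ - h v` colors
available at `v`, where `h v` counts the colors that the box has lost. -/
structure IsBoxFamily (θ : ℕ) (U : Finset V) (A : V → Finset C) (h : V → ℕ)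
    (E : Finset V) (X : Finset C) (Z : V → Finset C) : Prop where
  list_subset : ∀ v ∈ E, A v ⊆ X
  card_colors_le : #X ≤ θ * #E
  box_subset : ∀ v ∈ E ∩ U, Z v ⊆ A v
  le_card_box_add : ∀ v ∈ E ∩ U, θ ≤ #(Z v) + h v
  pairwiseDisjoint : ((E ∩ U : Finset V) : Set V).PairwiseDisjoint Z

variable {U U' E T : Finset V} {A A' : V → Finset C} {h : V → ℕ} {X : Finset C} {Z : V → Finset C}

theorem IsBoxFamily.shrink [Nonempty V] {c : C} (H : IsBoxFamily θ U A h E X Z) (hU : U' ⊆ U)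
    (hA : ∀ v, A' v ⊆ A v) (hA' : ∀ v, (A v).erase c ⊆ A' v) :
    ∃ u, IsBoxFamily θ U' A' (h + Pi.single u 1) E X fun v ↦ (Z v).erase c := by
  have hEU : E ∩ U' ⊆ E ∩ U := Finset.inter_subset_inter_left hU
  obtain ⟨u, hu⟩ : ∃ u, ∀ v ∈ E ∩ U, c ∈ Z v → v = u := by
    by_cases hex : ∃ u ∈ E ∩ U, c ∈ Z u
    · obtain ⟨u, huE, hcu⟩ := hex
      exact ⟨u, fun v hv hcv ↦ H.pairwiseDisjoint.elim_finset hv huE c hcv hcu⟩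
    · exact ⟨Classical.arbitrary V, fun v hv hcv ↦ absurd ⟨v, hv, hcv⟩ hex⟩
  refine ⟨u, fun v hv ↦ (hA v).trans (H.list_subset v hv), H.card_colors_le,
    fun v hv ↦ (Finset.erase_subset_erase c (H.box_subset v (hEU hv))).trans (hA' v),
    fun v hv ↦ ?_, fun v hv w hw hvw ↦ (H.pairwiseDisjoint (hEU hv) (hEU hw) hvw).mono
      (Finset.erase_subset _ _) (Finset.erase_subset _ _)⟩
  have hbox := H.le_card_box_add v (hEU hv)
  by_cases hcv : c ∈ Z v
  · obtain rfl := hu v (hEU hv) hcv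
    simp only [Finset.card_erase_of_mem hcv, Pi.add_apply, Pi.single_eq_same]
    omega
  · rw [Finset.erase_eq_of_notMem hcv, Pi.add_apply]
    omega

theorem IsBoxFamily.enlarge (H : IsBoxFamily θ U A h E X Z) (hTU : T ⊆ U \ E)
    (htight : #(T.biUnion fun v ↦ A v \ X) ≤ θ * #T)
    (hall : ∀ S ⊆ T, θ * #S ≤ #(S.biUnion fun v ↦ A v \ X)) :
    ∃ Z', IsBoxFamily θ U A h (E ∪ T) (X ∪ T.biUnion fun v ↦ A v \ X) Z' := by
  obtain ⟨Y, hY, hYdisj⟩ := exists_pairwiseDisjoint_subset_card_eq hall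
  have hTE : ∀ v ∈ T, v ∉ E := fun v hv ↦ (Finset.mem_sdiff.mp (hTU hv)).2
  have hET : (E ∪ T) ∩ U = E ∩ U ∪ T := by
    rw [Finset.union_inter_distrib_right,
      Finset.inter_eq_left.mpr (hTU.trans Finset.sdiff_subset)]
  let Z' : V → Finset C := fun v ↦ if v ∈ T then Y v else Z v
  have hZ'T : ∀ v ∈ T, Z' v = Y v := fun v hv ↦ if_pos hv
  have hZ'E : ∀ v ∈ E ∩ U, Z' v = Z v := fun v hv ↦
    if_neg fun hvT ↦ hTE v hvT (Finset.mem_inter.mp hv).1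
  refine ⟨Z', fun v hv ↦ ?_, ?_, fun v hv ↦ ?_, fun v hv ↦ ?_, ?_⟩
  · rcases Finset.mem_union.mp hv with hv | hv
    · exact (H.list_subset v hv).trans Finset.subset_union_left
    · refine sdiff_le_iff.mp ?_
      exact Finset.subset_biUnion_of_mem (fun v ↦ A v \ X) hv
  · rw [Finset.card_union_of_disjoint (Finset.disjoint_right.mpr hTE), mul_add]
    exact (Finset.card_union_le _ _).trans (add_le_add H.card_colors_le htight)
  · rcases Finset.mem_union.mp (hET ▸ hv) with hv | hv
    · exact hZ'E v hv ▸ H.box_subset v hv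
    · exact hZ'T v hv ▸ (hY v hv).1.trans Finset.sdiff_subset
  · rcases Finset.mem_union.mp (hET ▸ hv) with hv | hv
    · exact hZ'E v hv ▸ H.le_card_box_add v hv
    · rw [hZ'T v hv, (hY v hv).2]
      exact Nat.le_add_right _ _
  · rw [hET, Finset.coe_union, Set.pairwiseDisjoint_union]
    refine ⟨fun u hu v hv huv ↦ ?_, fun u hu v hv huv ↦ ?_, fun u hu v hv _ ↦ ?_⟩
    · simpa only [Function.onFun, hZ'E u hu, hZ'E v hv] using H.pairwiseDisjoint hu hv huv
    · simpa only [Function.onFun, hZ'T u hu, hZ'T v hv] using hYdisj hu hv huv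
    · rw [hZ'E u hu, hZ'T v hv]
      exact Finset.disjoint_of_subset_left
        ((H.box_subset u hu).trans (H.list_subset u (Finset.mem_inter.mp hu).1))
        (Finset.disjoint_of_subset_right (hY v hv).1 Finset.disjoint_sdiff)

/-- Maker's invariant: there are fewer than `g` endangered vertices, all of which are served by
boxes, while the lists of the other uncolored vertices satisfy Hall's condition with multiplicity
`θ`, strictly and outside of the colors `X`, for sets that would raise the number of endangered
vertices to at most `g`. -/
def HasReservation (θ g : ℕ) (U : Finset V) (A : V → Finset C) (h : V → ℕ) : Prop :=
  ∃ E X Z, IsBoxFamily θ U A h E X Z ∧ #E < g ∧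
    ∀ S ⊆ U \ E, S.Nonempty → #E + #S ≤ g → θ * #S < #(S.biUnion fun v ↦ A v \ X)

theorem hasReservation_univ [Fintype C] (hg : 0 < g) (hC : θ * g < Fintype.card C) (U : Finset V) :
    HasReservation θ g U (fun _ ↦ (Finset.univ : Finset C)) 0 := by
  refine ⟨∅, ∅, fun _ ↦ ∅, ⟨by simp, by simp, by simp, by simp, by simp⟩, by simpa, ?_⟩
  rintro S - ⟨v, hv⟩ hSg
  have hunion : (S.biUnion fun _ ↦ (Finset.univ : Finset C) \ ∅) = Finset.univ := by
    rw [Finset.eq_univ_iff_forall]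
    exact fun c ↦ Finset.mem_biUnion.mpr ⟨v, hv, by simp⟩
  rw [hunion, Finset.card_univ]
  exact (Nat.mul_le_mul_left θ (by simpa using hSg)).trans_lt hC

theorem HasReservation.list_nonempty (H : HasReservation θ g U A h) {v : V} (hv : v ∈ U)
    (hvθ : h v < θ) : (A v).Nonempty := by
  obtain ⟨E, X, Z, hZ, hEg, hexp⟩ := H
  by_cases hE : v ∈ E
  · have hvEU := Finset.mem_inter.mpr ⟨hE, hv⟩
    have hbox := hZ.le_card_box_add v hvEU
    exact (Finset.card_pos.mp (by omega)).mono (hZ.box_subset v hvEU)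
  · have hcard := hexp {v} (by simpa using ⟨hv, hE⟩) (Finset.singleton_nonempty v) (by simpa)
    rw [Finset.singleton_biUnion] at hcard
    exact (Finset.card_pos.mp (Nat.zero_lt_of_lt hcard)).mono Finset.sdiff_subset

theorem HasReservation.shrink [Nonempty V] {c : C} (H : HasReservation θ g U A h) (hU : U' ⊆ U)
    (hA : ∀ v, A' v ⊆ A v) (hA' : ∀ v, (A v).erase c ⊆ A' v) (hexp : IsExpanding θ g A') :
    ∃ u, HasReservation θ g U' A' (h + Pi.single u 1) := by
  obtain ⟨E, X, Z, hZ, hEg, hstrict⟩ := H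
  obtain ⟨u, hshrink⟩ := hZ.shrink hU hA hA'
  have hweak : ∀ S ⊆ U' \ E, #E + #S ≤ g → θ * #S ≤ #(S.biUnion fun v ↦ A' v \ X) := by
    intro S hS hSg
    rcases S.eq_empty_or_nonempty with rfl | hne
    · simp
    · have hlt := hstrict S (hS.trans (Finset.sdiff_subset_sdiff hU subset_rfl)) hne hSg
      have hloss : #(S.biUnion fun v ↦ A v \ X) ≤ #(S.biUnion fun v ↦ A' v \ X) + 1 :=
        card_biUnion_le_card_biUnion_add_one fun v _ ↦ by
          rw [← Finset.erase_sdiff_comm]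
          exact Finset.sdiff_subset_sdiff (hA' v) subset_rfl
      omega
  obtain ⟨T, hTU, hTg, htight, hTmax⟩ :=
    exists_maximal_tight θ (g - #E) (U' \ E) fun v ↦ A' v \ X
  have hET : #(E ∪ T) = #E + #T := Finset.card_union_of_disjoint
    (Finset.disjoint_of_subset_right hTU Finset.disjoint_sdiff)
  obtain ⟨Z', hZ'⟩ := hshrink.enlarge hTU htight fun S hS ↦
    hweak S (hS.trans hTU) (by have := Finset.card_le_card hS; omega)
  refine ⟨u, E ∪ T, _, Z', hZ', ?_, fun S hS hne hSg ↦ ?_⟩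
  · refine (show #(E ∪ T) ≤ g by omega).lt_of_ne fun hg ↦ ?_
    have hcard := (hexp (E ∪ T) hg).trans_le
      (Finset.card_le_card (Finset.biUnion_subset.mpr hZ'.list_subset))
    exact (hcard.trans_le hZ'.card_colors_le).ne (by rw [hg])
  · have hSV : S ⊆ (U' \ E) \ T := by rwa [sdiff_sdiff_left]
    refine (hTmax S hSV hne (by omega)).trans_eq ?_
    simp only [sdiff_sdiff_left, Finset.sup_eq_union]

end Lists

/-! ### The coloring game -/

section ColoringGame

variable {V : Type*} {k θ g : ℕ} {G : SimpleGraph V} {f : V → Option (Fin k)} {v w : V} {c : Fin k}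

open Classical in
/-- The colors that do not appear on the neighborhood of `v`; they form the list of `v` in the
reservation argument, whether or not `v` is colored itself. -/
noncomputable def availableColors (G : SimpleGraph V) (f : V → Option (Fin k)) (v : V) :
    Finset (Fin k) :=
  {c | ∀ u, G.Adj u v → f u ≠ some c}

@[simp]
theorem mem_availableColors : c ∈ availableColors G f v ↔ ∀ u, G.Adj u v → f u ≠ some c := by
  simp [availableColors]

theorem availableColors_none :
    availableColors G (fun _ ↦ none : V → Option (Fin k)) = fun _ ↦ Finset.univ := by
  ext
  simp

theorem legalMove_iff : LegalMove G f v c ↔ f v = none ∧ c ∈ availableColors G f v := by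
  rw [LegalMove, mem_availableColors]

/-- The vertices that the partial coloring `f` has not colored yet, from which the next move is
chosen. -/
def uncolored [Fintype V] (f : V → Option (Fin k)) : Finset V :=
  {v | f v = none}

@[simp]
theorem mem_uncolored [Fintype V] : v ∈ uncolored f ↔ f v = none := by
  simp [uncolored]

theorem exists_isLegal_strategy [Nonempty (V × Fin k)] (G : SimpleGraph V)
    (Q : (V → Option (Fin k)) → V × Fin k → Prop) :
    ∃ σ : Strategy V k, σ.IsLegal G ∧ ∀ f v c, LegalMove G f v c → Q f (v, c) →
      LegalMove G f (σ f).1 (σ f).2 ∧ Q f (σ f) := by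
  have hmove (f : V → Option (Fin k)) : ∃ m : V × Fin k,
      ((∃ v c, LegalMove G f v c) → LegalMove G f m.1 m.2) ∧
      ∀ v c, LegalMove G f v c → Q f (v, c) → LegalMove G f m.1 m.2 ∧ Q f m := by
    by_cases hQ : ∃ v c, LegalMove G f v c ∧ Q f (v, c)
    · obtain ⟨v, c, hvc⟩ := hQ
      exact ⟨(v, c), fun _ ↦ hvc.1, fun _ _ _ _ ↦ hvc⟩
    · push Not at hQ
      by_cases hlegal : ∃ v c, LegalMove G f v c
      · obtain ⟨v, c, hvc⟩ := hlegal
        exact ⟨(v, c), fun _ ↦ hvc, fun w d h h' ↦ absurd h' (hQ w d h)⟩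
      · exact ⟨Classical.arbitrary _, fun h ↦ absurd h hlegal,
          fun w d h ↦ absurd ⟨w, d, h⟩ hlegal⟩
  choose σ hσ using hmove
  exact ⟨σ, fun f ↦ (hσ f).1, fun f ↦ (hσ f).2⟩

variable [DecidableEq V]

theorem availableColors_update_subset (hw : f w = none) :
    availableColors G (Function.update f w (some c)) v ⊆ availableColors G f v := by
  simp only [Finset.subset_iff, mem_availableColors]
  intro d hd u huv hfu
  obtain rfl | huw := eq_or_ne u w
  · simp [hw] at hfu
  · exact hd u huv (by rwa [Function.update_of_ne huw])

theorem erase_subset_availableColors_update :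
    (availableColors G f v).erase c ⊆ availableColors G (Function.update f w (some c)) v := by
  simp only [Finset.subset_iff, Finset.mem_erase, mem_availableColors]
  rintro d ⟨hdc, hd⟩ u huv
  obtain rfl | huw := eq_or_ne u w
  · simpa using hdc.symm
  · simpa [Function.update_of_ne huw] using hd u huv

theorem play_succ_of_legal {σM σB : Strategy V k} {t : ℕ}
    (hlegal : ∃ v c, LegalMove G (play G σM σB t) v c) :
    play G σM σB (t + 1) = let f := play G σM σB t
      let m := if t % 2 = 0 then σM f else σB f
      Function.update f m.1 (some m.2) :=
  if_pos hlegal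

variable [Fintype V]

theorem uncolored_update :
    uncolored (Function.update f v (some c)) = (uncolored f).erase v := by
  ext w
  obtain rfl | hwv := eq_or_ne w v <;> simp [*]

variable {GM GB : (V → Option (Fin k)) → Prop}

theorem play_invariant {σM σB : Strategy V k} (h0 : GM fun _ ↦ none)
    (hM : ∀ f, GM f → (uncolored f).Nonempty →
      LegalMove G f (σM f).1 (σM f).2 ∧ GB (Function.update f (σM f).1 (some (σM f).2)))
    (hB : ∀ f, GB f → (uncolored f).Nonempty →
      LegalMove G f (σB f).1 (σB f).2 ∧ GM (Function.update f (σB f).1 (some (σB f).2)))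
    {t : ℕ} (ht : t ≤ Fintype.card V) :
    #(uncolored (play G σM σB t)) + t = Fintype.card V ∧
      if t % 2 = 0 then GM (play G σM σB t) else GB (play G σM σB t) := by
  induction t with
  | zero => simpa [play, uncolored] using h0
  | succ t ih =>
    obtain ⟨hcard, hinv⟩ := ih (by omega)
    set f := play G σM σB t
    have hne : (uncolored f).Nonempty := Finset.card_pos.mp (by omega)
    obtain ⟨hlegal, hinv'⟩ : let m := if t % 2 = 0 then σM f else σB f
        LegalMove G f m.1 m.2 ∧ if (t + 1) % 2 = 0
          then GM (Function.update f m.1 (some m.2))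
          else GB (Function.update f m.1 (some m.2)) := by
      rcases Nat.mod_two_eq_zero_or_one t with ht2 | ht2
      · simpa [ht2, Nat.add_mod] using hM f (by simpa [ht2] using hinv) hne
      · simpa [ht2, Nat.add_mod] using hB f (by simpa [ht2] using hinv) hne
    rw [play_succ_of_legal ⟨_, _, hlegal⟩]
    refine ⟨?_, hinv'⟩
    have := hne.card_pos
    rw [uncolored_update, Finset.card_erase_of_mem (mem_uncolored.mpr hlegal.1)]
    omega

variable [Nonempty V]

theorem makerWins_of_invariant (h0 : GM fun _ ↦ none)
    (hM : ∀ f, GM f → (uncolored f).Nonempty →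
      ∃ v c, LegalMove G f v c ∧ GB (Function.update f v (some c)))
    (hB : ∀ f, GB f → (uncolored f).Nonempty → ∃ v c, LegalMove G f v c)
    (hGM : ∀ f v c, GB f → LegalMove G f v c → GM (Function.update f v (some c))) :
    MakerWins G k := by
  obtain ⟨v₀, c₀, -⟩ := hM _ h0 (by simp [uncolored])
  have : Nonempty (V × Fin k) := ⟨(v₀, c₀)⟩
  obtain ⟨σM, hσM, hσM'⟩ := exists_isLegal_strategy G
    fun f m ↦ GB (Function.update f m.1 (some m.2))
  refine ⟨σM, hσM, fun σB hσB v hv ↦ ?_⟩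
  have hcard := (play_invariant (G := G) (σM := σM) (σB := σB) h0
    (fun f hf hne ↦ by
      obtain ⟨v, c, hvc, hGB⟩ := hM f hf hne
      exact hσM' f v c hvc hGB)
    (fun f hf hne ↦ have hlegal := hσB f (hB f hf hne)
      ⟨hlegal, hGM f _ _ hf hlegal⟩) le_rfl).1
  exact (Finset.card_pos.mpr ⟨v, mem_uncolored.mpr hv⟩).ne' (by omega)

theorem makerWins_of_forall_degree_lt [DecidableRel G.Adj] (hk : ∀ v, G.degree v < k) :
    MakerWins G k := by
  have hlegal : ∀ f : V → Option (Fin k), (uncolored f).Nonempty → ∃ v c, LegalMove G f v c := by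
    rintro f ⟨v, hv⟩
    have hcard : #((G.neighborFinset v).image f) < #(Finset.univ.map (Function.Embedding.some :
        Fin k ↪ Option (Fin k))) := by
      simpa using Finset.card_image_le.trans_lt (hk v)
    obtain ⟨x, hx, hxf⟩ := Finset.exists_mem_notMem_of_card_lt_card hcard
    obtain ⟨c, -, rfl⟩ := Finset.mem_map.mp hx
    exact ⟨v, c, mem_uncolored.mp hv, fun u huv hu ↦ hxf
      (Finset.mem_image.mpr ⟨u, by simpa using huv.symm, hu⟩)⟩
  exact makerWins_of_invariant (GM := fun _ ↦ True) (GB := fun _ ↦ True) trivial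
    (fun f _ hne ↦ by simpa using hlegal f hne) (fun f _ ↦ hlegal f) fun _ _ _ _ _ ↦ trivial

theorem gameChromaticNumber_le_card (G : SimpleGraph V) :
    gameChromaticNumber G ≤ Fintype.card V := by
  classical
  exact Nat.sInf_le (makerWins_of_forall_degree_lt fun v ↦ G.degree_lt_card_verts v)

end ColoringGame

/-! ### Maker's strategy -/

section MakerStrategy

variable {V : Type*} {U U' : Finset V} {h h' : V → ℕ} {v : V}

/-- The potential of the box game, in which a vertex of `U` weighs `(4 / 3) ^ h v` if its box has
lost `h v` colors. The base is so small that two further losses anywhere raise the potential by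
less than the largest weight. -/
noncomputable def hitPotential (U : Finset V) (h : V → ℕ) : ℝ :=
  ∑ v ∈ U, (4 / 3 : ℝ) ^ h v

theorem hitPotential_mono (hU : U' ⊆ U) (hh : h' ≤ h) : hitPotential U' h' ≤ hitPotential U h :=
  (Finset.sum_le_sum_of_subset_of_nonneg hU fun _ _ _ ↦ by positivity).trans
    (Finset.sum_le_sum fun v _ ↦ pow_le_pow_right₀ (by norm_num) (hh v))

theorem pow_le_hitPotential (hv : v ∈ U) : (4 / 3 : ℝ) ^ h v ≤ hitPotential U h :=
  Finset.single_le_sum (f := fun v ↦ (4 / 3 : ℝ) ^ h v) (fun _ _ ↦ by positivity) hv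

variable [DecidableEq V]

theorem hitPotential_add_single_le {m : ℕ} (hm : ∀ v ∈ U, h v ≤ m) (u : V) :
    hitPotential U (h + Pi.single u 1) ≤ hitPotential U h + (4 / 3) ^ m / 3 := by
  have hweight : ∀ v ∈ U, (4 / 3 : ℝ) ^ (h + Pi.single u 1 : V → ℕ) v
      ≤ (4 / 3) ^ h v + if v = u then (4 / 3) ^ m / 3 else 0 := by
    intro v hv
    obtain rfl | hvu := eq_or_ne v u
    · have := pow_le_pow_right₀ (by norm_num : (1 : ℝ) ≤ 4 / 3) (hm v hv)
      simp only [Pi.add_apply, Pi.single_eq_same, pow_succ, if_true]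
      linarith
    · simp [hvu]
  refine (Finset.sum_le_sum hweight).trans ?_
  rw [Finset.sum_add_distrib, Finset.sum_ite_eq', hitPotential]
  gcongr
  split_ifs
  · rfl
  · positivity

theorem hitPotential_erase_le (hv : v ∈ U) (hmax : ∀ w ∈ U, h w ≤ h v) (u u' : V) :
    hitPotential (U.erase v) (h + Pi.single u 1 + Pi.single u' 1) ≤ hitPotential U h := by
  have hmax₁ : ∀ w ∈ U.erase v, h w ≤ h v := fun w hw ↦ hmax w (Finset.mem_of_mem_erase hw)
  have hmax₂ : ∀ w ∈ U.erase v, (h + Pi.single u 1 : V → ℕ) w ≤ h v + 1 := fun w hw ↦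
    add_le_add (hmax₁ w hw) (by rw [Pi.single_apply]; split_ifs <;> simp)
  calc hitPotential (U.erase v) (h + Pi.single u 1 + Pi.single u' 1)
      ≤ hitPotential (U.erase v) h + (4 / 3) ^ h v / 3 + (4 / 3) ^ (h v + 1) / 3 :=
        (hitPotential_add_single_le hmax₂ u').trans
          (add_le_add_left (hitPotential_add_single_le hmax₁ u) _)
    _ = hitPotential (U.erase v) h + 7 / 9 * (4 / 3) ^ h v := by ring
    _ ≤ hitPotential (U.erase v) h + (4 / 3) ^ h v := by
        gcongr
        exact mul_le_of_le_one_left (by positivity) (by norm_num)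
    _ = hitPotential U h := Finset.sum_erase_add U _ hv

variable [Fintype V] [Nonempty V] {k θ g : ℕ} {G : SimpleGraph V}

theorem HasReservation.update {f : V → Option (Fin k)} {c : Fin k}
    (H : HasReservation θ g (uncolored f) (availableColors G f) h) (hv : f v = none)
    (hexp : IsExpanding θ g (availableColors G (Function.update f v (some c)))) :
    ∃ u, HasReservation θ g ((uncolored f).erase v)
      (availableColors G (Function.update f v (some c))) (h + Pi.single u 1) :=
  H.shrink (Finset.erase_subset v _) (fun _ ↦ availableColors_update_subset hv)
    (fun _ ↦ erase_subset_availableColors_update) hexp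

theorem makerWins_of_isExpanding (hk : θ * g < k) (hθ : Fintype.card V < (4 / 3 : ℝ) ^ θ)
    (hexp : ∀ f : V → Option (Fin k), IsExpanding θ g (availableColors G f)) :
    MakerWins G k := by
  have exists_legal {f : V → Option (Fin k)} {h : V → ℕ}
      (hres : HasReservation θ g (uncolored f) (availableColors G f) h)
      (hpot : hitPotential (uncolored f) h ≤ Fintype.card V) {v : V} (hv : v ∈ uncolored f) :
      ∃ c, LegalMove G f v c := by
    have hhv : h v < θ := (pow_lt_pow_iff_right₀ (by norm_num)).mp
      (((pow_le_hitPotential hv).trans hpot).trans_lt hθ)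
    obtain ⟨c, hc⟩ := hres.list_nonempty hv hhv
    exact ⟨c, legalMove_iff.mpr ⟨mem_uncolored.mp hv, hc⟩⟩
  let GM (f : V → Option (Fin k)) : Prop := ∃ h,
    HasReservation θ g (uncolored f) (availableColors G f) h ∧
      hitPotential (uncolored f) h ≤ Fintype.card V
  let GB (f : V → Option (Fin k)) : Prop := ∃ h,
    HasReservation θ g (uncolored f) (availableColors G f) h ∧
      ∀ u, hitPotential (uncolored f) (h + Pi.single u 1) ≤ Fintype.card V
  refine makerWins_of_invariant (GM := GM) (GB := GB) ⟨0, ?_, ?_⟩ ?_ ?_ ?_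
  · rw [availableColors_none]
    exact hasReservation_univ (hexp fun _ ↦ none).pos (by simpa using hk) _
  · simp [hitPotential, uncolored]
  · rintro f ⟨h, hres, hpot⟩ hne
    obtain ⟨v, hv, hmax⟩ := Finset.exists_max_image _ h hne
    obtain ⟨c, hc⟩ := exists_legal hres hpot hv
    obtain ⟨u, hres'⟩ := hres.update hc.1 (hexp _)
    refine ⟨v, c, hc, h + Pi.single u 1, ?_, fun u' ↦ ?_⟩ <;> rw [uncolored_update]
    · exact hres'
    · exact (hitPotential_erase_le hv hmax u u').trans hpot
  · rintro f ⟨h, hres, hpot⟩ ⟨v, hv⟩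
    exact ⟨v, exists_legal hres
      ((hitPotential_mono subset_rfl le_self_add).trans (hpot v)) hv⟩
  · rintro f v c ⟨h, hres, hpot⟩ hc
    obtain ⟨u, hres'⟩ := hres.update hc.1 (hexp (Function.update f v (some c)))
    refine ⟨h + Pi.single u 1, ?_, ?_⟩ <;> rw [uncolored_update]
    · exact hres'
    · exact (hitPotential_mono (Finset.erase_subset v _) le_rfl).trans (hpot u)

end MakerStrategy

/-! ### Lists in the random graph -/

section RandomGraph

variable {p : ℝ}

theorem isProbabilityMeasure_bernoulliBool (hp0 : 0 ≤ p) (hp1 : p ≤ 1) :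
    IsProbabilityMeasure (bernoulliBool p) := by
  constructor
  rw [bernoulliBool, Measure.add_apply, Measure.smul_apply, Measure.smul_apply, measure_univ,
    measure_univ, smul_eq_mul, smul_eq_mul, mul_one, mul_one,
    ← ENNReal.ofReal_add hp0 (sub_nonneg.mpr hp1), add_sub_cancel, ENNReal.ofReal_one]

theorem isProbabilityMeasure_erMeasure (hp0 : 0 ≤ p) (hp1 : p ≤ 1) (n : ℕ) :
    IsProbabilityMeasure (erMeasure n p) := by
  have := isProbabilityMeasure_bernoulliBool hp0 hp1
  rw [erMeasure]
  infer_instance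

section Product

variable {ι κ : Type*} [Fintype ι]

theorem measureReal_pi_bernoulliBool_exists_eq_true (hp0 : 0 ≤ p) (hp1 : p ≤ 1) (D : Finset ι) :
    (Measure.pi fun _ : ι ↦ bernoulliBool p).real {ω | ∃ e ∈ D, ω e = true} =
      1 - (1 - p) ^ #D := by
  classical
  have := isProbabilityMeasure_bernoulliBool hp0 hp1
  have hcompl : {ω : ι → Bool | ∃ e ∈ D, ω e = true}ᶜ =
      Set.univ.pi fun e ↦ if e ∈ D then {false} else Set.univ := by
    ext ω
    simp only [Set.mem_compl_iff, Set.mem_ofPred_eq, Set.mem_pi, Set.mem_univ, true_imp_iff]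
    push Not
    refine forall_congr' fun e ↦ ?_
    by_cases he : e ∈ D <;> simp [he]
  have hfactor (e : ι) : bernoulliBool p (if e ∈ D then {false} else Set.univ) =
      if e ∈ D then ENNReal.ofReal (1 - p) else 1 := by
    split_ifs
    · simp [bernoulliBool]
    · exact measure_univ
  rw [← compl_compl {ω : ι → Bool | _}, probReal_compl_eq_one_sub MeasurableSet.of_discrete, hcompl,
    measureReal_def, Measure.pi_pi]
  simp only [hfactor, Finset.prod_ite_mem, Finset.univ_inter, Finset.prod_const,
    ENNReal.toReal_pow, ENNReal.toReal_ofReal (sub_nonneg.mpr hp1)]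

theorem measureReal_pi_bernoulliBool_forall_exists_eq_true (hp0 : 0 ≤ p) (hp1 : p ≤ 1)
    {J : Finset κ} {D : κ → Finset ι} (hD : (J : Set κ).PairwiseDisjoint D) :
    (Measure.pi fun _ : ι ↦ bernoulliBool p).real {ω | ∀ j ∈ J, ∃ e ∈ D j, ω e = true} =
      ∏ j ∈ J, (1 - (1 - p) ^ #(D j)) := by
  classical
  have := isProbabilityMeasure_bernoulliBool hp0 hp1
  induction J using Finset.induction_on with
  | empty => simp
  | insert a s ha ih =>
    rw [Finset.coe_insert, Set.pairwiseDisjoint_insert_of_notMem (by simpa using ha)] at hD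
    have hindep := (ProbabilityTheory.iIndepFun_pi (μ := fun _ : ι ↦ bernoulliBool p)
      (X := fun _ ↦ id) fun _ ↦ aemeasurable_id).indepFun_finset (D a) (s.biUnion D)
      ((Finset.disjoint_biUnion_right _ _ _).mpr hD.2) measurable_pi_apply
    have hmul := hindep.measure_inter_preimage_eq_mul {x | ∃ e, x e = true}
      {x | ∀ j ∈ s, ∃ e : s.biUnion D, ↑e ∈ D j ∧ x e = true}
      MeasurableSet.of_discrete MeasurableSet.of_discrete
    have hfirst : (fun (ω : ι → Bool) (i : D a) ↦ id (ω i)) ⁻¹' {x | ∃ e, x e = true} =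
        {ω | ∃ e ∈ D a, ω e = true} := by
      ext ω
      simp
    have hrest : (fun (ω : ι → Bool) (i : s.biUnion D) ↦ id (ω i)) ⁻¹'
        {x | ∀ j ∈ s, ∃ e : s.biUnion D, ↑e ∈ D j ∧ x e = true} =
        {ω | ∀ j ∈ s, ∃ e ∈ D j, ω e = true} := by
      ext ω
      refine forall₂_congr fun j hj ↦ ⟨fun ⟨e, he⟩ ↦ ⟨e, he⟩, fun ⟨e, he, hω⟩ ↦ ?_⟩
      exact ⟨⟨e, Finset.mem_biUnion.mpr ⟨j, hj, he⟩⟩, he, hω⟩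
    rw [hfirst, hrest] at hmul
    simp only [Finset.forall_mem_insert, Set.ofPred_and, measureReal_def, hmul, ENNReal.toReal_mul,
      Finset.prod_insert ha]
    rw [← measureReal_def, ← measureReal_def, ih hD.1,
      measureReal_pi_bernoulliBool_exists_eq_true hp0 hp1]

theorem measureReal_pi_bernoulliBool_forall_exists_eq_true_le (hp0 : 0 ≤ p) (hp1 : p ≤ 1)
    {J : Finset κ} {D : κ → Finset ι} (hD : (J : Set κ).PairwiseDisjoint D) :
    (Measure.pi fun _ : ι ↦ bernoulliBool p).real {ω | ∀ j ∈ J, ∃ e ∈ D j, ω e = true} ≤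
      Real.exp (-∑ j ∈ J, (1 - p) ^ #(D j)) := by
  rw [measureReal_pi_bernoulliBool_forall_exists_eq_true hp0 hp1 hD, ← Finset.sum_neg_distrib,
    Real.exp_sum]
  exact Finset.prod_le_prod
    (fun j _ ↦ sub_nonneg.mpr (pow_le_one₀ (sub_nonneg.mpr hp1) (sub_le_self 1 hp0)))
    fun j _ ↦ Real.one_sub_le_exp_neg _

end Product

theorem mul_rpow_div_le_sum_pow {C : Type*} {Y : Finset C} {d : C → ℕ} {q : ℝ} {m n : ℕ}
    (hq0 : 0 < q) (hq1 : q ≤ 1) (hm : m ≤ #Y) (hd : ∑ c ∈ Y, d c ≤ n) :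
    m * q ^ (n / m : ℝ) ≤ ∑ c ∈ Y, q ^ d c := by
  rcases Nat.eq_zero_or_pos m with rfl | hm0
  · simpa using Finset.sum_nonneg fun c _ ↦ (pow_pos hq0 (d c)).le
  set x : ℝ := n / m
  have hlog : 0 ≤ -Real.log q := neg_nonneg.mpr (Real.log_nonpos hq0.le hq1)
  -- the tangent line at `x` of the convex function `t ↦ q ^ t`
  have htangent (c : C) : q ^ x * (1 + -Real.log q * (x - d c)) ≤ q ^ d c := by
    calc q ^ x * (1 + -Real.log q * (x - d c))
        ≤ q ^ x * Real.exp (Real.log q * (d c - x)) := by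
          gcongr
          linarith [Real.add_one_le_exp (Real.log q * (d c - x))]
      _ = q ^ d c := by
          rw [← Real.rpow_def_of_pos hq0, ← Real.rpow_add hq0, add_sub_cancel, Real.rpow_natCast]
  have hcard : (m : ℝ) ≤ #Y := by exact_mod_cast hm
  have hmean : ∑ c ∈ Y, (d c : ℝ) ≤ #Y * x :=
    calc ∑ c ∈ Y, (d c : ℝ) ≤ n := by exact_mod_cast hd
      _ = m * x := (mul_div_cancel₀ _ (by positivity)).symm
      _ ≤ #Y * x := by gcongr
  calc m * q ^ x ≤ q ^ x * (#Y + -Real.log q * (#Y * x - ∑ c ∈ Y, (d c : ℝ))) := by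
        rw [mul_comm]
        gcongr
        exact hcard.trans (le_add_of_nonneg_right (mul_nonneg hlog (sub_nonneg.mpr hmean)))
    _ = ∑ c ∈ Y, q ^ x * (1 + -Real.log q * (x - d c)) := by
        simp only [← Finset.mul_sum, Finset.sum_add_distrib, Finset.sum_sub_distrib,
          Finset.sum_const, nsmul_eq_mul, mul_one]
    _ ≤ ∑ c ∈ Y, q ^ d c := Finset.sum_le_sum fun c _ ↦ htangent c

section Blocks

variable {n k : ℕ} {f : Fin n → Option (Fin k)} {S : Finset (Fin n)} {X : Finset (Fin k)}
  {v : Fin n} {c : Fin k}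

/-- The colors outside of `X` that `f` does not use on `S`. None of them is available at a vertex of
`S` whose list lies in `X`, which forces edges from `S` to their color classes outside of `S`. -/
def freshColors (f : Fin n → Option (Fin k)) (S : Finset (Fin n)) (X : Finset (Fin k)) :
    Finset (Fin k) :=
  {c | c ∉ X ∧ ∀ v ∈ S, f v ≠ some c}

/-- The potential edges between `v` and those vertices outside of `S` that `f` colors with `c`.
Leaving out `S` makes these sets disjoint for distinct `v ∈ S`, hence the events that they contain
an edge independent. -/
def edgesToColorClass (f : Fin n → Option (Fin k)) (S : Finset (Fin n)) (v : Fin n) (c : Fin k) :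
    Finset (EdgeIdx n) :=
  {e | ∃ w ∉ S, f w = some c ∧ e.1 = s(v, w)}

theorem le_card_freshColors_add (f : Fin n → Option (Fin k)) (S : Finset (Fin n))
    (X : Finset (Fin k)) : k ≤ #(freshColors f S X) + #X + #S := by
  have hcover : (Finset.univ : Finset (Fin k)) ⊆
      freshColors f S X ∪ X ∪ S.biUnion fun v ↦ (f v).toFinset := by
    intro c _
    simp only [freshColors, Finset.mem_union, Finset.mem_filter_univ, Finset.mem_biUnion,
      Option.mem_toFinset, Option.mem_def]
    grind
  have hused : #(S.biUnion fun v ↦ (f v).toFinset) ≤ #S * 1 :=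
    Finset.card_biUnion_le_card_mul _ _ _ fun v _ ↦ by cases f v <;> simp
  have hcard := Finset.card_le_card hcover
  rw [Finset.card_univ, Fintype.card_fin] at hcard
  have := Finset.card_union_le (freshColors f S X ∪ X) (S.biUnion fun v ↦ (f v).toFinset)
  have := Finset.card_union_le (freshColors f S X) X
  omega

theorem card_edgesToColorClass_le : #(edgesToColorClass f S v c) ≤ #{w | f w = some c} := by
  rw [← Finset.card_image_of_injective _ Subtype.val_injective]
  refine (Finset.card_le_card ?_).trans (Finset.card_image_le (f := fun w ↦ s(v, w)))
  simp only [edgesToColorClass, Finset.image_subset_iff, Finset.mem_filter_univ]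
  rintro e ⟨w, -, hwc, hew⟩
  exact Finset.mem_image.mpr ⟨w, by simpa using hwc, hew.symm⟩

theorem pairwiseDisjoint_edgesToColorClass (f : Fin n → Option (Fin k)) (S : Finset (Fin n))
    (Y : Finset (Fin k)) :
    ((S ×ˢ Y : Finset (Fin n × Fin k)) : Set (Fin n × Fin k)).PairwiseDisjoint
      fun x ↦ edgesToColorClass f S x.1 x.2 := by
  rintro ⟨v, c⟩ hv ⟨v', c'⟩ - hne
  refine Finset.disjoint_left.mpr fun e he he' ↦ hne ?_
  simp only [edgesToColorClass, Finset.mem_filter_univ] at he he'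
  obtain ⟨w, -, hwc, hew⟩ := he
  obtain ⟨w', hw'S, hwc', hew'⟩ := he'
  rcases Sym2.eq_iff.mp (hew.symm.trans hew') with ⟨rfl, rfl⟩ | ⟨rfl, -⟩
  · simpa using hwc.symm.trans hwc'
  · exact absurd (Finset.mem_product.mp hv).1 hw'S

theorem exists_mem_edgesToColorClass_eq_true {ω : EdgeIdx n → Bool}
    (hc : c ∈ freshColors f S X) (hX : availableColors (erGraph n ω) f v ⊆ X) :
    ∃ e ∈ edgesToColorClass f S v c, ω e = true := by
  simp only [freshColors, Finset.mem_filter_univ] at hc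
  have hblocked : c ∉ availableColors (erGraph n ω) f v := fun h ↦ hc.1 (hX h)
  simp only [mem_availableColors] at hblocked
  push Not at hblocked
  obtain ⟨w, hwv, hwc⟩ := hblocked
  have hdiag : ¬ s(v, w).IsDiag := by simpa using hwv.ne'
  refine ⟨⟨s(v, w), hdiag⟩, ?_, hwv.symm.2 hdiag⟩
  simpa only [edgesToColorClass, Finset.mem_filter_univ] using
    ⟨w, fun hwS ↦ hc.2 w hwS hwc, hwc, rfl⟩

theorem sum_card_colorClass_le (f : Fin n → Option (Fin k)) (Y : Finset (Fin k)) :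
    ∑ c ∈ Y, #{w | f w = some c} ≤ n := by
  calc ∑ c ∈ Y, #{w | f w = some c}
      = ∑ x ∈ Y.map Function.Embedding.some, #{w | f w = x} := by
        rw [Finset.sum_map]
        rfl
    _ ≤ n := by
        rw [Finset.sum_card_fiberwise_eq_card_filter]
        exact (Finset.card_le_univ _).trans_eq (Fintype.card_fin n)

theorem erMeasure_availableColors_subset_le {m : ℕ} (hp0 : 0 ≤ p) (hp1 : p < 1)
    (hm : m + #X + #S ≤ k) :
    (erMeasure n p).real {ω | ∀ v ∈ S, availableColors (erGraph n ω) f v ⊆ X} ≤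
      Real.exp (-(#S * (m * (1 - p) ^ (n / m : ℝ)))) := by
  have := isProbabilityMeasure_erMeasure hp0 hp1.le n
  set Y := freshColors f S X
  have hmY : m ≤ #Y := by
    have : k ≤ #Y + #X + #S := le_card_freshColors_add f S X
    omega
  have hsum : #S * (m * (1 - p) ^ (n / m : ℝ)) ≤
      ∑ x ∈ S ×ˢ Y, (1 - p) ^ #(edgesToColorClass f S x.1 x.2) := by
    rw [Finset.sum_product, ← nsmul_eq_mul]
    refine Finset.card_nsmul_le_sum _ _ _ fun v _ ↦ ?_
    exact mul_rpow_div_le_sum_pow (sub_pos.mpr hp1) (sub_le_self 1 hp0) hmY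
      ((Finset.sum_le_sum fun c _ ↦ card_edgesToColorClass_le).trans (sum_card_colorClass_le f Y))
  calc (erMeasure n p).real {ω | ∀ v ∈ S, availableColors (erGraph n ω) f v ⊆ X}
      ≤ (erMeasure n p).real
          {ω | ∀ x ∈ S ×ˢ Y, ∃ e ∈ edgesToColorClass f S x.1 x.2, ω e = true} := by
        refine measureReal_mono (fun ω hω x hx ↦ ?_)
        obtain ⟨hxS, hxY⟩ := Finset.mem_product.mp hx
        exact exists_mem_edgesToColorClass_eq_true hxY (hω _ hxS)
    _ ≤ Real.exp (-∑ x ∈ S ×ˢ Y, (1 - p) ^ #(edgesToColorClass f S x.1 x.2)) :=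
        measureReal_pi_bernoulliBool_forall_exists_eq_true_le hp0 hp1.le
          (pairwiseDisjoint_edgesToColorClass f S Y)
    _ ≤ Real.exp (-(#S * (m * (1 - p) ^ (n / m : ℝ)))) :=
        Real.exp_le_exp.mpr (neg_le_neg hsum)

end Blocks

theorem erMeasure_not_makerWins_le {n k θ g m : ℕ} (hn : 0 < n) (hg : 0 < g) (hp0 : 0 ≤ p)
    (hp1 : p < 1) (hθ : n < (4 / 3 : ℝ) ^ θ) (hk : m + θ * g + g ≤ k) :
    (erMeasure n p).real {ω | ¬ MakerWins (erGraph n ω) k} ≤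
      (k + 1) ^ n * 2 ^ k * 2 ^ n * Real.exp (-(g * (m * (1 - p) ^ (n / m : ℝ)))) := by
  have := isProbabilityMeasure_erMeasure hp0 hp1.le n
  have : Nonempty (Fin n) := ⟨⟨0, hn⟩⟩
  let I : Finset ((Fin n → Option (Fin k)) × Finset (Fin k) × Finset (Fin n)) :=
    {x | #x.2.1 ≤ θ * g ∧ #x.2.2 = g}
  let bad (x : (Fin n → Option (Fin k)) × Finset (Fin k) × Finset (Fin n)) :
      Set (EdgeIdx n → Bool) := {ω | ∀ v ∈ x.2.2, availableColors (erGraph n ω) x.1 v ⊆ x.2.1}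
  have hcover : {ω | ¬ MakerWins (erGraph n ω) k} ⊆ ⋃ x ∈ I, bad x := by
    intro ω hω
    have hexp : ¬ ∀ f, IsExpanding θ g (availableColors (erGraph n ω) (k := k) f) := fun hexp ↦
      hω (makerWins_of_isExpanding (by omega) (by simpa using hθ) hexp)
    simp only [IsExpanding] at hexp
    push Not at hexp
    obtain ⟨f, S, hS, hcard⟩ := hexp
    exact Set.mem_biUnion (x := (f, _, S)) (by simpa [I] using ⟨hcard, hS⟩)
      fun v hv ↦ Finset.subset_biUnion_of_mem _ hv
  have hI : (#I : ℝ) ≤ (k + 1) ^ n * 2 ^ k * 2 ^ n := by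
    have := Finset.card_le_univ I
    simp only [Fintype.card_prod, Fintype.card_fun, Fintype.card_option, Fintype.card_finset,
      Fintype.card_fin, ← mul_assoc] at this
    exact_mod_cast this
  calc (erMeasure n p).real {ω | ¬ MakerWins (erGraph n ω) k}
      ≤ ∑ x ∈ I, (erMeasure n p).real (bad x) :=
        (measureReal_mono hcover (measure_ne_top _ _)).trans (measureReal_biUnion_finset_le _ _)
    _ ≤ #I • Real.exp (-(g * (m * (1 - p) ^ (n / m : ℝ)))) := by
        refine Finset.sum_le_card_nsmul _ _ _ fun x hx ↦ ?_
        obtain ⟨hX, hS⟩ : #x.2.1 ≤ θ * g ∧ #x.2.2 = g := by simpa [I] using hx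
        exact hS ▸ erMeasure_availableColors_subset_le hp0 hp1 (by omega)
    _ ≤ (k + 1) ^ n * 2 ^ k * 2 ^ n * Real.exp (-(g * (m * (1 - p) ^ (n / m : ℝ)))) := by
        rw [nsmul_eq_mul]
        gcongr

end RandomGraph

/-! ### The number of colors -/

section Numerics

variable {n m g k : ℕ} {p s δ ε : ℝ}

/-- The leading term `n / log_b (n * p)`, where `b = 1 / (1 - p)`, of the number of colors that
Maker needs. -/
noncomputable def colorScale (n : ℕ) (p : ℝ) : ℝ :=
  n / (Real.log (n * p) / Real.log (1 / (1 - p)))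

theorem le_log_one_div_one_sub (hp1 : p < 1) : p ≤ Real.log (1 / (1 - p)) := by
  have := Real.one_sub_inv_le_log_of_pos (one_div_pos.mpr (sub_pos.mpr hp1))
  rwa [one_div, inv_inv, sub_sub_cancel, ← one_div] at this

theorem mul_div_log_le_colorScale (hp0 : 0 < p) (hp1 : p < 1) (hnp : 1 < n * p) :
    n * p / Real.log n ≤ colorScale n p := by
  rw [colorScale, div_div_eq_mul_div]
  have hlog : 0 < Real.log (n * p) := Real.log_pos hnp
  have hle : n * p ≤ n := mul_le_of_le_one_right (Nat.cast_nonneg n) hp1.le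
  have hbase : p ≤ Real.log (1 / (1 - p)) := le_log_one_div_one_sub hp1
  have := hp0.trans_le hbase
  gcongr

theorem rpow_neg_le_one_sub_rpow_div (hp0 : 0 < p) (hp1 : p < 1) (hnp : 1 < n * p) (hs : 0 < s)
    (hm : colorScale n p / s ≤ m) : (n * p : ℝ) ^ (-s) ≤ (1 - p) ^ (n / m : ℝ) := by
  have hlog : 0 < Real.log (n * p) := Real.log_pos hnp
  have hn : (0 : ℝ) < n := pos_of_mul_pos_left (one_pos.trans hnp) hp0.le
  have hbase : 0 < Real.log (1 / (1 - p)) := hp0.trans_le (le_log_one_div_one_sub hp1)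
  have hm0 : (0 : ℝ) < m := lt_of_lt_of_le (by rw [colorScale]; positivity) hm
  have hexponent : Real.log (1 / (1 - p)) * (n / m) ≤ Real.log (n * p) * s := by
    rw [colorScale, div_div_eq_mul_div, div_div, div_le_iff₀ (by positivity)] at hm
    rw [← mul_div_assoc, div_le_iff₀ hm0]
    linarith
  rw [one_div, Real.log_inv] at hexponent
  rw [Real.rpow_def_of_pos (by positivity), Real.rpow_def_of_pos (sub_pos.mpr hp1)]
  exact Real.exp_le_exp.mpr (by linarith)

theorem rpow_one_sub_le_mul (hn : 0 < n) (hp : (n : ℝ) ^ (-δ) ≤ p) :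
    (n : ℝ) ^ (1 - δ) ≤ n * p := by
  rw [sub_eq_add_neg, Real.rpow_add (by positivity), Real.rpow_one]
  gcongr

theorem one_lt_mul_of_rpow_neg_le (hn : 1 < n) (hδ : δ < 1) (hp : (n : ℝ) ^ (-δ) ≤ p) :
    1 < n * p :=
  (Real.one_lt_rpow (by exact_mod_cast hn) (by linarith)).trans_le
    (rpow_one_sub_le_mul (by omega) hp)

theorem mul_rpow_mul_log_le_colorScale {C : ℝ} (hn : 1 < n) (hδ : δ < 1)
    (hp : (n : ℝ) ^ (-δ) ≤ p) (hp1 : p < 1) (hC : C * Real.log n ^ 2 ≤ (n : ℝ) ^ δ) :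
    C * ((n : ℝ) ^ (1 - 2 * δ) * Real.log n) ≤ colorScale n p := by
  have hn0 : (0 : ℝ) < n := by positivity
  have hlog : 0 < Real.log n := Real.log_pos (by exact_mod_cast hn)
  calc C * ((n : ℝ) ^ (1 - 2 * δ) * Real.log n)
      = n ^ (1 - 2 * δ) * (C * Real.log n ^ 2) / Real.log n := by field_simp
    _ ≤ n ^ (1 - 2 * δ) * n ^ δ / Real.log n := by gcongr
    _ = n ^ (1 - δ) / Real.log n := by rw [← Real.rpow_add hn0]; ring_nf
    _ ≤ n * p / Real.log n := by gcongr; exact rpow_one_sub_le_mul (by omega) hp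
    _ ≤ colorScale n p := mul_div_log_le_colorScale ((Real.rpow_pos_of_pos hn0 _).trans_le hp) hp1
        (one_lt_mul_of_rpow_neg_le hn hδ hp)

theorem mul_log_le_mul_rpow_div (hn : 1 < n) (hδ0 : 0 < δ) (hδ : δ < 1 / 4)
    (hp : (n : ℝ) ^ (-δ) ≤ p) (hp1 : p < 1) (hlog : 5 * Real.log n ^ 2 ≤ (n : ℝ) ^ δ)
    (hm : colorScale n p / (1 - 4 * δ) ≤ m) (hg : (n : ℝ) ^ (1 - 2 * δ) ≤ g) :
    5 * (n * Real.log n) ≤ g * (m * (1 - p) ^ (n / m : ℝ)) := by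
  have hn1 : (1 : ℝ) < n := by exact_mod_cast hn
  have hn0 : (0 : ℝ) < n := by positivity
  have hlog0 : 0 < Real.log n := Real.log_pos hn1
  have hp0 : 0 < p := (Real.rpow_pos_of_pos hn0 _).trans_le hp
  have hnp : 1 < n * p := one_lt_mul_of_rpow_neg_le hn (by linarith) hp
  have hmnp : n * p / Real.log n ≤ m := by
    have hscale := mul_div_log_le_colorScale hp0 hp1 hnp
    exact hscale.trans ((le_div_self (le_trans (by positivity) hscale) (by linarith)
      (by linarith)).trans hm)
  have hpow : (n : ℝ) ^ (3 * δ) ≤ (n * p : ℝ) ^ (4 * δ) :=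
    calc (n : ℝ) ^ (3 * δ) ≤ n ^ ((1 - δ) * (4 * δ)) :=
          Real.rpow_le_rpow_of_exponent_le hn1.le (by nlinarith)
      _ = (n ^ (1 - δ)) ^ (4 * δ) := Real.rpow_mul hn0.le _ _
      _ ≤ (n * p) ^ (4 * δ) := by gcongr; exact rpow_one_sub_le_mul (by omega) hp
  calc 5 * (n * Real.log n) = n * (5 * Real.log n ^ 2) / Real.log n := by field_simp
    _ ≤ n * n ^ δ / Real.log n := by gcongr
    _ = n ^ (1 - 2 * δ) * (n ^ (3 * δ) / Real.log n) := by
        rw [← mul_div_assoc, ← Real.rpow_add hn0, ← Real.rpow_one_add' hn0.le (by linarith)]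
        ring_nf
    _ ≤ n ^ (1 - 2 * δ) * ((n * p) ^ (4 * δ) / Real.log n) := by gcongr
    _ = n ^ (1 - 2 * δ) * (n * p / Real.log n * (n * p) ^ (-(1 - 4 * δ))) := by
        rw [div_mul_eq_mul_div, ← Real.rpow_one_add' (by positivity) (by linarith)]
        ring_nf
    _ ≤ g * (m * (1 - p) ^ (n / m : ℝ)) := by
        gcongr
        exact rpow_neg_le_one_sub_rpow_div hp0 hp1 hnp (by linarith) hm

theorem natCast_lt_pow_ceil_log (hn : 0 < n) :
    n < (4 / 3 : ℝ) ^ (⌈4 * Real.log n⌉₊ + 1) := by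
  have hlog : (1 : ℝ) / 4 ≤ Real.log (4 / 3) := by
    have := Real.one_sub_inv_le_log_of_pos (x := 4 / 3) (by norm_num)
    norm_num at this ⊢
    linarith
  rw [← Real.log_lt_log_iff (by positivity) (by positivity), Real.log_pow]
  push_cast
  nlinarith [Nat.le_ceil (4 * Real.log n)]

theorem ceil_add_mul_ceil_add_ceil_le_floor {R A x : ℝ} (hε : 0 < ε) (hA : 1 ≤ A) (hx : 1 ≤ x)
    (hR : 30 / ε * (A * x) ≤ R) :
    ⌈(1 + ε / 2) * R⌉₊ + (⌈4 * x⌉₊ + 1) * ⌈A⌉₊ + ⌈A⌉₊ ≤ ⌊(1 + ε) * R⌋₊ := by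
  have hR0 : 0 ≤ R := le_trans (by positivity) hR
  have hAx : 1 ≤ A * x := one_le_mul_of_one_le_of_one_le hA hx
  have hlists := (Nat.ceil_lt_add_one (by positivity : 0 ≤ (1 + ε / 2) * R)).le
  have hboxes : (⌈4 * x⌉₊ + 2 : ℝ) * ⌈A⌉₊ ≤ (7 * x) * (2 * A) := by
    have := (Nat.ceil_lt_add_one (by positivity : 0 ≤ 4 * x)).le
    have := (Nat.ceil_lt_add_one (by positivity : 0 ≤ A)).le
    gcongr <;> linarith
  have hslack : 15 * (A * x) ≤ ε / 2 * R := by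
    calc 15 * (A * x) = ε / 2 * (30 / ε * (A * x)) := by field_simp; norm_num
      _ ≤ ε / 2 * R := by gcongr
  refine Nat.le_floor ?_
  push_cast
  linarith

theorem add_one_pow_mul_two_pow_le_exp (hn : 2 ≤ n) (hk : k ≤ n) :
    ((k + 1) ^ n * 2 ^ k * 2 ^ n : ℝ) ≤ Real.exp (4 * (n * Real.log n)) := by
  have hnat : (k + 1) ^ n * 2 ^ k * 2 ^ n ≤ n ^ (4 * n) :=
    calc (k + 1) ^ n * 2 ^ k * 2 ^ n ≤ (2 * n) ^ n * 2 ^ n * 2 ^ n := by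
          gcongr
          · omega
          · norm_num
      _ = (2 ^ 3 * n) ^ n := by rw [← mul_pow, ← mul_pow]; ring
      _ ≤ (n ^ 3 * n) ^ n := by gcongr
      _ = n ^ (4 * n) := by rw [← pow_succ, ← pow_mul]
  calc ((k + 1) ^ n * 2 ^ k * 2 ^ n : ℝ) ≤ n ^ (4 * n) := by exact_mod_cast hnat
    _ = Real.exp (4 * (n * Real.log n)) := by
        rw [← Real.rpow_natCast, Real.rpow_def_of_pos (by positivity)]
        push_cast
        ring_nf

theorem erMeasure_not_makerWins_le_exp_neg (hkn : k ≤ n) (hk : ⌊(1 + ε) * colorScale n p⌋₊ ≤ k)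
    (hn : 1 ≤ Real.log n) (hε : 0 < ε) (hδ : δ = ε / (4 * (2 + ε))) (hp : (n : ℝ) ^ (-δ) ≤ p)
    (hp1 : p < 1) (hlog : 5 * Real.log n ^ 2 ≤ (n : ℝ) ^ δ)
    (hlogε : 30 / ε * Real.log n ^ 2 ≤ (n : ℝ) ^ δ) :
    (erMeasure n p).real {ω | ¬ MakerWins (erGraph n ω) k} ≤ Real.exp (-n) := by
  have hn2 : 2 ≤ n := by
    by_contra! h
    interval_cases n <;> norm_num at hn
  have hn0 : (0 : ℝ) < n := by positivity
  have hn1 : (1 : ℝ) ≤ n := by exact_mod_cast one_le_two.trans hn2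
  have hδ0 : 0 < δ := by rw [hδ]; positivity
  have hδ4 : 1 - 4 * δ = (1 + ε / 2)⁻¹ := by rw [hδ]; field_simp; ring
  have hδ1 : δ < 1 / 4 := by linarith [inv_pos.mpr (by positivity : 0 < 1 + ε / 2)]
  have hp0 : 0 < p := (Real.rpow_pos_of_pos hn0 _).trans_le hp
  set A := (n : ℝ) ^ (1 - 2 * δ)
  have hA : 1 ≤ A := Real.one_le_rpow hn1 (by linarith)
  set m := ⌈(1 + ε / 2) * colorScale n p⌉₊
  have hm : colorScale n p / (1 - 4 * δ) ≤ m := by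
    rw [hδ4, div_inv_eq_mul, mul_comm]
    exact Nat.le_ceil _
  have hbudget := ceil_add_mul_ceil_add_ceil_le_floor hε hA hn
    (mul_rpow_mul_log_le_colorScale hn2 (by linarith) hp hp1 hlogε)
  have hexponent := mul_log_le_mul_rpow_div hn2 hδ0 hδ1 hp hp1 hlog hm (Nat.le_ceil A)
  have hprefactor := add_one_pow_mul_two_pow_le_exp hn2 hkn
  calc (erMeasure n p).real {ω | ¬ MakerWins (erGraph n ω) k}
      ≤ (k + 1) ^ n * 2 ^ k * 2 ^ n * Real.exp (-(⌈A⌉₊ * (m * (1 - p) ^ (n / m : ℝ)))) :=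
        erMeasure_not_makerWins_le (by omega) (Nat.ceil_pos.mpr (by positivity)) hp0.le hp1
          (natCast_lt_pow_ceil_log (by omega)) (hbudget.trans hk)
    _ ≤ Real.exp (4 * (n * Real.log n)) * Real.exp (-(5 * (n * Real.log n))) := by gcongr
    _ = Real.exp (-(n * Real.log n)) := by rw [← Real.exp_add]; ring_nf
    _ ≤ Real.exp (-n) := by
        gcongr
        exact le_mul_of_one_le_right hn0.le hn

theorem erMeasure_gameChromaticNumber_gt_le_exp_neg (hn : 1 ≤ Real.log n) (hε : 0 < ε)
    (hδ : δ = ε / (4 * (2 + ε))) (hp : (n : ℝ) ^ (-δ) ≤ p) (hp1 : p < 1)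
    (hlog : 5 * Real.log n ^ 2 ≤ (n : ℝ) ^ δ) (hlogε : 30 / ε * Real.log n ^ 2 ≤ (n : ℝ) ^ δ) :
    (erMeasure n p).real {ω | (1 + ε) * colorScale n p < gameChromaticNumber (erGraph n ω)} ≤
      Real.exp (-n) := by
  have hn1 : 1 < n := by
    by_contra! h
    interval_cases n <;> norm_num at hn
  have : NeZero n := ⟨by omega⟩
  rcases lt_or_ge (n : ℝ) ((1 + ε) * colorScale n p) with htrivial | hkn
  · have hempty :
        {ω | (1 + ε) * colorScale n p < gameChromaticNumber (erGraph n ω)} = ∅ := by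
      refine Set.eq_empty_of_forall_notMem fun ω hω ↦ (htrivial.trans hω).not_ge ?_
      exact_mod_cast (gameChromaticNumber_le_card (erGraph n ω)).trans_eq (Fintype.card_fin n)
    rw [hempty, measureReal_empty]
    exact (Real.exp_pos _).le
  · have hn0 : (0 : ℝ) < n := by positivity
    have hp0 : 0 < p := (Real.rpow_pos_of_pos hn0 _).trans_le hp
    have hδ1 : δ < 1 := by rw [hδ, div_lt_one (by positivity)]; linarith
    have hscale : 0 ≤ colorScale n p := le_trans (by positivity)
      (mul_div_log_le_colorScale hp0 hp1 (one_lt_mul_of_rpow_neg_le hn1 hδ1 hp))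
    have := isProbabilityMeasure_erMeasure hp0.le hp1.le n
    refine (measureReal_mono (fun ω hω hwin ↦ ?_)).trans
      (erMeasure_not_makerWins_le_exp_neg (Nat.floor_le_of_le hkn) le_rfl hn hε hδ hp hp1 hlog
        hlogε)
    have hle : gameChromaticNumber (erGraph n ω) ≤ ⌊(1 + ε) * colorScale n p⌋₊ := Nat.sInf_le hwin
    exact absurd hω ((Nat.le_floor_iff (by positivity)).mp hle).not_gt

theorem eventually_mul_log_sq_le_rpow (hδ : 0 < δ) (C : ℝ) :
    ∀ᶠ n : ℕ in atTop, C * Real.log n ^ 2 ≤ (n : ℝ) ^ δ := by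
  have hlittle := (isLittleO_log_rpow_rpow_atTop 2 hδ).const_mul_left C
  filter_upwards [(hlittle.comp_tendsto tendsto_natCast_atTop_atTop).eventuallyLE] with n hn
  rw [Function.comp_apply, Function.comp_apply, Real.rpow_two, Real.norm_eq_abs,
    Real.norm_of_nonneg (by positivity)] at hn
  exact (le_abs_self _).trans hn

theorem eventually_rpow_neg_le {p : ℕ → ℝ} (hp0 : ∀ n, 0 < p n)
    (hp : Tendsto (fun n ↦ Real.log (1 / p n) / Real.log n) atTop (𝓝 0)) (hδ : 0 < δ) :
    ∀ᶠ n : ℕ in atTop, (n : ℝ) ^ (-δ) ≤ p n := by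
  filter_upwards [hp.eventually_le_const hδ, eventually_gt_atTop 1] with n hn hn1
  have hlog : 0 < Real.log n := Real.log_pos (by exact_mod_cast hn1)
  rw [div_le_iff₀ hlog, one_div, Real.log_inv] at hn
  rw [Real.rpow_def_of_pos (by positivity), ← Real.le_log_iff_exp_le (hp0 n)]
  linarith

end Numerics

theorem tendsto_measure_one_of_compl_le {Ω : ℕ → Type*} [∀ n, MeasurableSpace (Ω n)]
    {μ : ∀ n, Measure (Ω n)} {s : ∀ n, Set (Ω n)} {u : ℕ → ℝ}
    (hμ : ∀ᶠ n in atTop, IsProbabilityMeasure (μ n)) (hs : ∀ n, MeasurableSet (s n))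
    (hle : ∀ᶠ n in atTop, (μ n).real (s n)ᶜ ≤ u n) (hu : Tendsto u atTop (𝓝 0)) :
    Tendsto (fun n ↦ μ n (s n)) atTop (𝓝 1) := by
  have hreal : Tendsto (fun n ↦ 1 - (μ n).real (s n)ᶜ) atTop (𝓝 1) := by
    simpa using (squeeze_zero' (.of_forall fun n ↦ measureReal_nonneg) hle hu).const_sub 1
  rw [← ENNReal.ofReal_one]
  refine (ENNReal.tendsto_ofReal hreal).congr' ?_
  filter_upwards [hμ] with n hn
  rw [← probReal_compl_eq_one_sub (hs n).compl, compl_compl, ofReal_measureReal]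

theorem game_chromatic_number_upper_bound_whp_general {p : ℕ → ℝ} {ε : ℝ} (hε : 0 < ε)
    (hpbig : ∀ᶠ n : ℕ in atTop, (n : ℝ) ^ (-(ε / (4 * (2 + ε)))) ≤ p n)
    (hp1 : ∀ᶠ n in atTop, p n < 1) :
    Tendsto (fun n ↦ erMeasure n (p n) {ω : EdgeIdx n → Bool |
          (gameChromaticNumber (erGraph n ω) : ℝ) ≤
            (1 + ε) * n / (Real.log (n * p n) / Real.log (1 / (1 - p n)))})
      atTop (𝓝 1) := by
  have hδ : 0 < ε / (4 * (2 + ε)) := by positivity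
  refine tendsto_measure_one_of_compl_le (u := fun n ↦ Real.exp (-n)) ?_
    (fun _ ↦ MeasurableSet.of_discrete) ?_
    (Real.tendsto_exp_neg_atTop_nhds_zero.comp tendsto_natCast_atTop_atTop)
  · filter_upwards [hpbig, hp1] with n hn hn1
    exact isProbabilityMeasure_erMeasure ((Real.rpow_nonneg n.cast_nonneg _).trans hn) hn1.le n
  · have hlog : Tendsto (fun n : ℕ ↦ Real.log n) atTop atTop :=
      Real.tendsto_log_atTop.comp tendsto_natCast_atTop_atTop
    filter_upwards [hpbig, hp1, hlog.eventually_ge_atTop 1, eventually_mul_log_sq_le_rpow hδ 5,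
      eventually_mul_log_sq_le_rpow hδ (30 / ε)] with n hn hn1 hn2 h5 hC
    simpa only [colorScale, mul_div_assoc, Set.compl_ofPred, not_le] using
      erMeasure_gameChromaticNumber_gt_le_exp_neg hn2 hε rfl hn hn1 h5 hC

/-- Theorem 2 of Keusch–Steger. For `p(n) ≤ 1 - η` with
`p(n) ≥ e^{-o(log n)}`, with high probability the game chromatic number of
`G(n, p(n))` is at most `(1 + ε) · n / log_b(np)` where `b = 1/(1-p)`. -/
theorem game_chromatic_number_upper_bound_whp
    (η : ℝ) (hη0 : 0 < η) (hη1 : η < 1)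
    (p : ℕ → ℝ) (hp0 : ∀ n, 0 < p n) (hp1 : ∀ n, p n ≤ 1 - η)
    (hpbig : Tendsto (fun n => Real.log (1 / p n) / Real.log n) atTop (nhds 0))
    (ε : ℝ) (hε : 0 < ε) :
    Tendsto (fun n =>
        erMeasure n (p n) {ω : EdgeIdx n → Bool |
          (gameChromaticNumber (erGraph n ω) : ℝ) ≤
            (1 + ε) * n / (Real.log (n * p n) / Real.log (1 / (1 - p n)))})
      atTop (nhds 1) :=
  game_chromatic_number_upper_bound_whp_general hε
    (eventually_rpow_neg_le hp0 hpbig (by positivity))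
    (.of_forall fun n ↦ (hp1 n).trans_lt (by linarith))
end

section
/- Let q, d, z ∈ ℕ with z ≥ 1, let A_1, …, A_k be pairwise disjoint finite sets, and define f(1,q,d) := zq + d and f(m,q,d) := (zq + d)·m·(1 + ∑_{i=1}^{m−1} 1/i) for m > 1. Suppose that ∑_{i∈I} |A_i| > f(|I|, q, d) for every nonempty subset I ⊆ {1, …, k}. Then in every play of the box game B(A_1, …, A_k; q, z) in which the index removed at every step t with t ≡ 1 (mod z) is chosen d-greedily, every surviving set remains nonempty throughout the play; in particular Maker wins the box game by playing d-greedily. -/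
open Finset

/-!
Write `H n` for the harmonic numbers. The invariant is that every nonempty set `J` of surviving
boxes has average size more than `c * H (#J - 1)`, where `c = z * q + d`; for singletons it says
that no box is empty. Suppose it holds when Maker really moves and removes `j`. Given a set `J` of
`m` boxes surviving at some point within the next `z` steps, apply it to `J ∪ {j}`: since `j` is, up
to `d`, no larger than the average of `J`, the average of `J` at Maker's move exceeds
`c * H m - d / (m + 1)`, which is at least `c * H (m - 1) + z * q / m`. In those steps Breaker
deletes at most `z * q` elements, which lowers the average of `J` by at most `z * q / m`.
-/

section BoxGame

variable {ι K : Type*} [Field K] [LinearOrder K]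

section Threshold

/-- Maker's invariant in the box game with weights `w`: every nonempty `J ⊆ S` has average weight
more than `c * (1 + 1/2 + ⋯ + 1/(#J - 1))`, stated without dividing by `#J`. -/
def ExceedsBoxThreshold (c : K) (S : Finset ι) (w : ι → K) : Prop :=
  ∀ J ⊆ S, J.Nonempty → c * #J * (harmonic (#J - 1) : K) < ∑ i ∈ J, w i

theorem ExceedsBoxThreshold.pos {c : K} {S : Finset ι} {w : ι → K}
    (h : ExceedsBoxThreshold c S w) {i : ι} (hi : i ∈ S) : 0 < w i := by
  simpa using h {i} (singleton_subset_iff.2 hi) (singleton_nonempty i)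

variable [IsStrictOrderedRing K]

theorem exceedsBoxThreshold_of_one_add_sum {c : K} (hc : 0 ≤ c) {S : Finset ι} {w : ι → K}
    (h : ∀ J ⊆ S, J.Nonempty →
      c * #J * (1 + ∑ i ∈ range (#J - 1), (1 : K) / (i + 1)) < ∑ i ∈ J, w i) :
    ExceedsBoxThreshold c S w := by
  intro J hJ hne
  have hharmonic : (harmonic (#J - 1) : K) = ∑ i ∈ range (#J - 1), (1 : K) / (i + 1) := by
    simp [harmonic]
  rw [hharmonic]
  refine lt_of_le_of_lt ?_ (h J hJ hne)
  gcongr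
  exact le_add_of_nonneg_left zero_le_one

theorem card_mul_le_sum_add_card_mul {J : Finset ι} {w : ι → K} {a d : K}
    (h : ∀ i ∈ J, a ≤ w i + d) : #J * a ≤ ∑ i ∈ J, w i + #J * d := by
  simpa [sum_add_distrib] using card_nsmul_le_sum J (fun i ↦ w i + d) a h

variable [DecidableEq ι]

theorem ExceedsBoxThreshold.add_lt_sum_of_greedy {c d : K} {S : Finset ι} {w : ι → K} {j : ι}
    (h : ExceedsBoxThreshold c S w) (hj : j ∈ S) (hgreedy : ∀ i ∈ S, w j ≤ w i + d)
    {J : Finset ι} (hJ : J ⊆ S.erase j) (hne : J.Nonempty) :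
    c * #J * (harmonic (#J - 1) : K) + (c - d) < ∑ i ∈ J, w i := by
  have hd : 0 ≤ d := by simpa using hgreedy j hj
  have hJS : J ⊆ S := hJ.trans (erase_subset j S)
  have hjJ : j ∉ J := fun hmem ↦ notMem_erase j S (hJ hmem)
  have hinsert := h (insert j J) (insert_subset hj hJS) (insert_nonempty j J)
  have haverage := card_mul_le_sum_add_card_mul fun i hi ↦ hgreedy i (hJS hi)
  obtain ⟨m, hm⟩ : ∃ m, #J = m + 1 := Nat.exists_eq_add_one.2 hne.card_pos
  rw [sum_insert hjJ, card_insert_of_notMem hjJ, hm, Nat.add_sub_cancel, harmonic_succ] at hinsert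
  rw [hm] at haverage ⊢
  rw [Nat.add_sub_cancel]
  push_cast at hinsert haverage ⊢
  set H : K := (harmonic m : K)
  refine lt_of_mul_lt_mul_left ?_ (by positivity : (0 : K) ≤ m + 1 + 1)
  calc (m + 1 + 1) * (c * (m + 1) * H + (c - d))
      ≤ (m + 1 + 1) * (c * (m + 1) * H + (c - d)) + d := le_add_of_nonneg_right hd
    _ = (m + 1) * (c * (m + 1 + 1) * (H + (m + 1 : K)⁻¹)) - (m + 1) * d := by
        field_simp
        ring
    _ < (m + 1) * (w j + ∑ i ∈ J, w i) - (m + 1) * d := by gcongr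
    _ ≤ (m + 1 + 1) * ∑ i ∈ J, w i := by linarith

theorem ExceedsBoxThreshold.of_greedy {c d r : K} {S T : Finset ι} {w w' : ι → K} {j : ι}
    (h : ExceedsBoxThreshold c S w) (hj : j ∈ S) (hgreedy : ∀ i ∈ S, w j ≤ w i + d)
    (hc : r + d ≤ c) (hT : T ⊆ S.erase j)
    (hloss : ∀ J ⊆ T, ∑ i ∈ J, w i ≤ ∑ i ∈ J, w' i + r) :
    ExceedsBoxThreshold c T w' := by
  intro J hJ hne
  have hbefore := h.add_lt_sum_of_greedy hj hgreedy (hJ.trans hT) hne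
  linarith [hloss J hJ]

end Threshold

section Play

variable [DecidableEq ι]

/-- The first `k` steps of a play of the box game, with sets replaced by weights: in step `t` the
box `j t` is removed from the set `I t` of survivors, and then Breaker lowers the weights `w t` of
the remaining boxes by at most `q` in total. Decreases are measured by positive parts, so that a
weight that grows does not pay for one that shrinks. -/
structure IsBoxPlay (k : ℕ) (q : K) (I : ℕ → Finset ι) (w : ℕ → ι → K) (j : ℕ → ι) : Prop where
  mem : ∀ t < k, j t ∈ I t
  succ_eq_erase : ∀ t < k, I (t + 1) = (I t).erase (j t)
  sum_posPart_le : ∀ t < k, ∑ i ∈ I (t + 1), (w t i - w (t + 1) i)⁺ ≤ q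

namespace IsBoxPlay

variable {k : ℕ} {q : K} {I : ℕ → Finset ι} {w : ℕ → ι → K} {j : ℕ → ι}

theorem subset_of_le (play : IsBoxPlay k q I w j) {s t : ℕ} (hst : s ≤ t) (ht : t ≤ k) :
    I t ⊆ I s := by
  induction t, hst using Nat.le_induction with
  | base => exact Subset.rfl
  | succ t _ ih =>
    rw [play.succ_eq_erase t ht]
    exact (erase_subset _ _).trans (ih (Nat.le_of_succ_le ht))

variable [IsStrictOrderedRing K]

theorem natCast {q : ℕ} {w : ℕ → ι → ℕ}
    (hmem : ∀ t < k, j t ∈ I t) (hstep : ∀ t < k, I (t + 1) = (I t).erase (j t))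
    (hloss : ∀ t < k, ∑ i ∈ I (t + 1), (w t i - w (t + 1) i) ≤ q) :
    IsBoxPlay k (q : K) I (fun t i ↦ (w t i : K)) j where
  mem := hmem
  succ_eq_erase := hstep
  sum_posPart_le t ht := by
    have hcast (a b : ℕ) : ((a : K) - b)⁺ = ((a - b : ℕ) : K) := by
      obtain hab | hba := le_total a b
      · simp [hab]
      · rw [Nat.cast_sub hba, posPart_eq_self, sub_nonneg]
        exact Nat.cast_le.2 hba
    simp only [hcast]
    exact_mod_cast hloss t ht

theorem nonneg (play : IsBoxPlay k q I w j) {t : ℕ} (ht : t < k) : 0 ≤ q :=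
  (sum_nonneg fun _ _ ↦ posPart_nonneg _).trans (play.sum_posPart_le t ht)

theorem sum_le_sum_succ_add (play : IsBoxPlay k q I w j) {t : ℕ} (ht : t < k)
    {J : Finset ι} (hJ : J ⊆ I (t + 1)) : ∑ i ∈ J, w t i ≤ ∑ i ∈ J, w (t + 1) i + q := by
  have hdecrease := calc
    ∑ i ∈ J, (w t i - w (t + 1) i) ≤ ∑ i ∈ J, (w t i - w (t + 1) i)⁺ :=
      sum_le_sum fun _ _ ↦ le_posPart _
    _ ≤ ∑ i ∈ I (t + 1), (w t i - w (t + 1) i)⁺ :=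
      sum_le_sum_of_subset_of_nonneg hJ fun _ _ _ ↦ posPart_nonneg _
    _ ≤ q := play.sum_posPart_le t ht
  rwa [sum_sub_distrib, sub_le_iff_le_add'] at hdecrease

theorem sum_le_sum_add_mul (play : IsBoxPlay k q I w j) {s n : ℕ} (hn : s + n ≤ k)
    {J : Finset ι} (hJ : J ⊆ I (s + n)) :
    ∑ i ∈ J, w s i ≤ ∑ i ∈ J, w (s + n) i + n * q := by
  induction n with
  | zero => simp
  | succ n ih =>
    have hearlier := ih (Nat.le_of_succ_le hn) (hJ.trans (play.subset_of_le (Nat.le_succ _) hn))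
    have hlast : ∑ i ∈ J, w (s + n) i ≤ ∑ i ∈ J, w (s + n + 1) i + q :=
      play.sum_le_sum_succ_add hn hJ
    rw [← add_assoc]
    push_cast
    linarith

theorem exceedsBoxThreshold_add (play : IsBoxPlay k q I w j) {d : K} {z s n : ℕ}
    (h : ExceedsBoxThreshold (z * q + d) (I s) (w s))
    (hgreedy : ∀ i ∈ I s, w s (j s) ≤ w s i + d) (hn : 0 < n) (hnz : n ≤ z) (hk : s + n ≤ k) :
    ExceedsBoxThreshold (z * q + d) (I (s + n)) (w (s + n)) := by
  have hs : s < k := by lia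
  have hq : 0 ≤ q := play.nonneg hs
  refine h.of_greedy (play.mem s hs) hgreedy le_rfl ?_ fun J hJ ↦ ?_
  · rw [← play.succ_eq_erase s hs]
    exact play.subset_of_le (by lia) hk
  · refine (play.sum_le_sum_add_mul hk hJ).trans ?_
    gcongr

theorem exceedsBoxThreshold (play : IsBoxPlay k q I w j) {d : K} {z : ℕ} (hz : 1 ≤ z)
    (hinit : ExceedsBoxThreshold (z * q + d) (I 0) (w 0))
    (hgreedy : ∀ t < k, t % z = 0 → ∀ i ∈ I t, w t (j t) ≤ w t i + d) {t : ℕ} (ht : t ≤ k) :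
    ExceedsBoxThreshold (z * q + d) (I t) (w t) := by
  induction t using Nat.strong_induction_on with
  | _ t ih =>
    obtain rfl | hpos := Nat.eq_zero_or_pos t
    · exact hinit
    obtain ⟨s, n, hs, hn, hnz, rfl⟩ : ∃ s n, s % z = 0 ∧ 0 < n ∧ n ≤ z ∧ s + n = t :=
      ⟨z * ((t - 1) / z), (t - 1) % z + 1, Nat.mul_mod_right _ _, Nat.succ_pos _,
        Nat.mod_lt _ hz, by rw [← add_assoc, Nat.div_add_mod, Nat.sub_add_cancel hpos]⟩
    exact play.exceedsBoxThreshold_add (ih s (by lia) (by lia)) (hgreedy s (by lia) hs) hn hnz ht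

end IsBoxPlay

theorem box_game_maker_wins_general [IsStrictOrderedRing K] {k z : ℕ} {q d : K} (hz : 1 ≤ z)
    {I : ℕ → Finset ι} {w : ℕ → ι → K} {j : ℕ → ι} (play : IsBoxPlay k q I w j)
    (hinit : ExceedsBoxThreshold (z * q + d) (I 0) (w 0))
    (hgreedy : ∀ t < k, t % z = 0 → ∀ i ∈ I t, w t (j t) ≤ w t i + d) :
    ∀ t ≤ k, ∀ i ∈ I t, 0 < w t i :=
  fun _ ht _ hi ↦ (play.exceedsBoxThreshold hz hinit hgreedy ht).pos hi

end Play

end BoxGame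

/-- Lemma 4 of Keusch–Steger, the generalized box game.
Given pairwise disjoint sets `A 0, …, A (k-1)` whose partial sums satisfy
`∑_{i ∈ I} |A i| > f(|I|, q, d)` with
`f(m,q,d) = (zq+d)·m·(1 + ∑_{i=1}^{m-1} 1/i)`, in every play of the box game
`B(A_1, …, A_k; q, z)` in which Maker's real moves (steps `t ≡ 0 (mod z)`,
`0`-indexed) are chosen `d`-greedily, every surviving set stays nonempty;
in particular Maker wins by playing `d`-greedily. -/
theorem box_game_maker_wins
    {α : Type*} [DecidableEq α] (k q d z : ℕ) (hz : 1 ≤ z)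
    (A : Fin k → Finset α)
    (hdisj : ∀ i j : Fin k, i ≠ j → Disjoint (A i) (A j))
    (hsum : ∀ I : Finset (Fin k), I.Nonempty →
      ((z * q + d : ℝ)) * I.card *
          (1 + ∑ i ∈ Finset.range (I.card - 1), (1 : ℝ) / (i + 1)) <
        ∑ i ∈ I, ((A i).card : ℝ))
    -- a play of the box game:
    (I : ℕ → Finset (Fin k)) (A' : ℕ → Fin k → Finset α) (j : ℕ → Fin k)
    (hI0 : I 0 = Finset.univ) (hA'0 : A' 0 = A)
    -- in step `t`, the chosen index `j t` is removed from `I t` ...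
    (hjmem : ∀ t < k, j t ∈ I t)
    (hIstep : ∀ t < k, I (t + 1) = (I t).erase (j t))
    -- ... and then Breaker deletes at most `q` elements from the surviving sets
    (hsub : ∀ t < k, ∀ i ∈ I (t + 1), A' (t + 1) i ⊆ A' t i)
    (hdel : ∀ t < k, ∑ i ∈ I (t + 1), ((A' t i).card - (A' (t + 1) i).card) ≤ q)
    -- every `z`-th step is a real Maker move, played `d`-greedily
    (hgreedy : ∀ t < k, t % z = 0 → ∀ i ∈ I t, (A' t (j t)).card ≤ (A' t i).card + d) :
    ∀ t ≤ k, ∀ i ∈ I t, (A' t i).Nonempty := by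
  subst hA'0
  exact fun t ht i hi ↦ card_pos.1 <| Nat.cast_pos.1 <| box_game_maker_wins_general hz
    (IsBoxPlay.natCast (K := ℝ) hjmem hIstep hdel)
    (exceedsBoxThreshold_of_one_add_sum (by positivity) fun J _ ↦ hsum J)
    (mod_cast hgreedy) t ht i hi
end

section
/- Let η ∈ (0,1) and α > 1 be constants, set ξ := (1 − 1/α)/10, and let p : ℕ → ℝ satisfy 0 < p(n) ≤ 1 − η and log(1/p(n))/log n → 0. With b := 1/(1 − p(n)), log_b(np) := log(n·p(n))/log b, and d := ⌈(n·p(n))^{1−4ξ}⌉, let 𝒜_n be the event that the random graph G_{n,p(n)} contains pairwise disjoint vertex sets A, C_1, C_2, …, C_d such that |A| ≥ d, |C_i| ≤ (1/α + ξ)·log_b(np) for all i ∈ {1, …, d}, and for all i ∈ {1, …, d} and all v ∈ A the neighborhood of v intersects C_i. Then the probability of 𝒜_n tends to 0 as n → ∞. -/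
open MeasureTheory Filter


/-!
For a fixed choice of `A, C_1, …, C_d` the events that `v ∈ A` has a neighbor in `C_i` depend on
pairwise disjoint sets of vertex pairs, so they are independent, and each has probability
`1 - (1 - p) ^ |C_i| ≤ exp (-(1 - p) ^ K)`, where `K` bounds the class sizes. So all of them occur
with probability at most `exp (-d² (1 - p) ^ K)`, while there are only `exp (O(n log n))` choices.
For `K = κ log_b (np)` and `d = ⌈(np) ^ β⌉` the exponent `d² (1 - p) ^ K` is at least
`(np) ^ (2β - κ)`, and `np = n ^ (1 - o(1))`, so the union bound succeeds as soon as `2β - κ > 1`.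
Here `β = 1 - 4ξ` and `κ = 1/α + ξ = 1 - 9ξ`, so that `2β - κ = 1 + ξ`.
-/

open ProbabilityTheory Asymptotics Topology Function
open scoped Finset

section Independence

lemma iIndepFun_restrict_of_pairwise_disjoint {Ω ι J : Type*} {β : ι → Type*}
    [MeasurableSpace Ω] [∀ i, MeasurableSpace (β i)] {P : Measure Ω} {f : ∀ i, Ω → β i}
    (hf : iIndepFun f P) (hf_meas : ∀ i, Measurable (f i)) {S : J → Finset ι}
    (hS : Pairwise (Disjoint on S)) :
    iIndepFun (fun j ω (i : S j) ↦ f i ω) P := by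
  classical
  have := hf.isProbabilityMeasure
  refine iIndepFun_iff_measure_inter_preimage_eq_mul.2 fun T sets hsets ↦ ?_
  induction T using Finset.induction_on with
  | empty => simp
  | insert a T ha ih =>
    have hT : ∀ j ∈ T, MeasurableSet (sets j) := fun j hj ↦ hsets j (Finset.mem_insert_of_mem hj)
    have hdisj : Disjoint (S a) (T.biUnion S) :=
      (Finset.disjoint_biUnion_right _ _ _).2 fun j hj ↦ hS (ne_of_mem_of_not_mem hj ha).symm
    let B : Set (∀ i : T.biUnion S, β i) :=
      ⋂ j : T, Finset.restrict₂ (Finset.subset_biUnion_of_mem S j.2) ⁻¹' sets j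
    have hB : MeasurableSet B :=
      .iInter fun j ↦ Finset.measurable_restrict₂ _ (hT j j.2)
    have hpre : (fun ω (i : T.biUnion S) ↦ f i ω) ⁻¹' B =
        ⋂ j ∈ T, (fun ω (i : S j) ↦ f i ω) ⁻¹' sets j := by
      simp only [B, Set.preimage_iInter, Set.iInter_subtype]
      rfl
    have hind := hf.indepFun_finset (S a) (T.biUnion S) hdisj hf_meas
    rw [Finset.set_biInter_insert, Finset.prod_insert ha, ← hpre,
      hind.measure_inter_preimage_eq_mul _ _ (hsets a (Finset.mem_insert_self a T)) hB, hpre, ih hT]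

end Independence

section BernoulliProduct

variable {ι : Type*} [Fintype ι] {p : ℝ}

lemma isProbabilityMeasure_bernoulliBool_s6 (hp : p ∈ Set.Icc 0 1) :
    IsProbabilityMeasure (bernoulliBool p) where
  measure_univ := by
    simp [bernoulliBool, ← ENNReal.ofReal_add hp.1 (sub_nonneg.2 hp.2)]

lemma bernoulliBool_singleton_false (p : ℝ) :
    bernoulliBool p {false} = ENNReal.ofReal (1 - p) := by
  simp [bernoulliBool]

lemma pi_bernoulliBool_exists_true (hp : p ∈ Set.Icc 0 1) (S : Finset ι) :
    Measure.pi (fun _ ↦ bernoulliBool p) {ω : ι → Bool | ∃ e ∈ S, ω e = true} =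
      ENNReal.ofReal (1 - (1 - p) ^ #S) := by
  have := isProbabilityMeasure_bernoulliBool_s6 hp
  have hq : 0 ≤ 1 - p := sub_nonneg.2 hp.2
  have hcompl : {ω : ι → Bool | ∃ e ∈ S, ω e = true} =
      ((S : Set ι).pi fun _ ↦ {false})ᶜ := by
    ext ω
    simp [Set.mem_pi]
  rw [hcompl, prob_compl_eq_one_sub (Set.toFinite _).measurableSet, Measure.pi_pi_finset,
    Finset.prod_const, bernoulliBool_singleton_false, ← ENNReal.ofReal_pow hq,
    ENNReal.ofReal_sub _ (pow_nonneg hq _), ENNReal.ofReal_one]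

lemma pi_bernoulliBool_forall_exists_true {J : Type*} [Fintype J] (hp : p ∈ Set.Icc 0 1)
    {S : J → Finset ι} (hS : Pairwise (Disjoint on S)) :
    Measure.pi (fun _ ↦ bernoulliBool p) {ω : ι → Bool | ∀ j, ∃ e ∈ S j, ω e = true} =
      ∏ j, ENNReal.ofReal (1 - (1 - p) ^ #(S j)) := by
  have := isProbabilityMeasure_bernoulliBool_s6 hp
  have hind : iIndepFun (fun i (ω : ι → Bool) ↦ ω i) (Measure.pi fun _ : ι ↦ bernoulliBool p) :=
    iIndepFun_pi (X := fun _ x ↦ x) fun _ ↦ aemeasurable_id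
  have hblock (j : J) : (fun (ω : ι → Bool) (i : S j) ↦ ω i) ⁻¹' {x | ∃ e, x e = true} =
      {ω | ∃ e ∈ S j, ω e = true} := by
    ext ω
    simp
  have hmul := (iIndepFun_restrict_of_pairwise_disjoint hind measurable_pi_apply
    hS).measure_inter_preimage_eq_mul Finset.univ (sets := fun _ ↦ {x | ∃ e, x e = true})
    fun _ _ ↦ (Set.toFinite _).measurableSet
  simpa only [hblock, pi_bernoulliBool_exists_true hp, Finset.mem_univ, Set.iInter_true,
    ← Set.ofPred_forall, forall_true_left] using hmul

end BernoulliProduct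

section StarEdges

variable {n : ℕ} {v w : Fin n} {C D : Finset (Fin n)}

/-- The pairs `{v, u}` with `u ∈ C`, as coordinates of the sample space: the coordinates that decide
whether `v` has a neighbor in `C`. The diagonal pair, if `v ∈ C`, is discarded. -/
def starEdges (v : Fin n) (C : Finset (Fin n)) : Finset (EdgeIdx n) :=
  (C.image fun u ↦ s(v, u)).subtype fun e ↦ ¬ e.IsDiag

lemma mem_starEdges {e : EdgeIdx n} : e ∈ starEdges v C ↔ ∃ u ∈ C, s(v, u) = e.1 := by
  simp [starEdges]

lemma card_starEdges (hv : v ∉ C) : #(starEdges v C) = #C := by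
  have hdiag : ∀ e ∈ C.image fun u ↦ s(v, u), ¬ e.IsDiag := by
    simp only [Finset.forall_mem_image, Sym2.mk_isDiag_iff]
    exact fun u hu hvu ↦ hv (hvu ▸ hu)
  rw [starEdges, Finset.card_subtype, Finset.filter_true_of_mem hdiag,
    Finset.card_image_of_injective _ fun _ _ ↦ Sym2.congr_right.1]

lemma exists_adj_iff_exists_mem_starEdges {ω : EdgeIdx n → Bool} :
    (∃ u ∈ C, (erGraph n ω).Adj v u) ↔ ∃ e ∈ starEdges v C, ω e = true := by
  constructor
  · rintro ⟨u, hu, hne, hω⟩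
    have hdiag : ¬ s(v, u).IsDiag := hne
    exact ⟨⟨s(v, u), hdiag⟩, mem_starEdges.2 ⟨u, hu, rfl⟩, hω hdiag⟩
  · rintro ⟨⟨e, hdiag⟩, he, hω⟩
    obtain ⟨u, hu, rfl⟩ := mem_starEdges.1 he
    exact ⟨u, hu, hdiag, fun _ ↦ hω⟩

lemma disjoint_starEdges_of_disjoint (hCD : Disjoint C D) (hw : w ∉ C) :
    Disjoint (starEdges v C) (starEdges w D) := by
  refine Finset.disjoint_left.2 fun e hC hD ↦ ?_
  obtain ⟨u, hu, hvu⟩ := mem_starEdges.1 hC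
  obtain ⟨u', hu', hwu'⟩ := mem_starEdges.1 hD
  rcases Sym2.eq_iff.1 (hvu.trans hwu'.symm) with ⟨-, rfl⟩ | ⟨-, rfl⟩
  · exact Finset.disjoint_left.1 hCD hu hu'
  · exact hw hu

lemma disjoint_starEdges_of_ne (hvw : v ≠ w) (hw : w ∉ C) :
    Disjoint (starEdges v C) (starEdges w D) := by
  refine Finset.disjoint_left.2 fun e hC hD ↦ ?_
  obtain ⟨u, hu, hvu⟩ := mem_starEdges.1 hC
  obtain ⟨u', -, hwu'⟩ := mem_starEdges.1 hD
  rcases Sym2.eq_iff.1 (hvu.trans hwu'.symm) with ⟨rfl, -⟩ | ⟨-, rfl⟩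
  · exact hvw rfl
  · exact hw hu

theorem erMeasure_forall_exists_adj {ι : Type*} [Fintype ι] {p : ℝ} (hp : p ∈ Set.Icc 0 1)
    {A : Finset (Fin n)} {C : ι → Finset (Fin n)} (hAC : ∀ i, Disjoint A (C i))
    (hC : Pairwise (Disjoint on C)) :
    erMeasure n p {ω | ∀ i, ∀ v ∈ A, ∃ u ∈ C i, (erGraph n ω).Adj v u} =
      ∏ i, ENNReal.ofReal (1 - (1 - p) ^ #(C i)) ^ #A := by
  have hA (v : A) (i : ι) : v.1 ∉ C i := Finset.disjoint_left.1 (hAC i) v.2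
  have hcard (i : ι) (v : A) : #(starEdges v.1 (C i)) = #(C i) := card_starEdges (hA v i)
  have hstars : Pairwise (Disjoint on fun x : ι × A ↦ starEdges x.2.1 (C x.1)) := by
    rintro ⟨i, v⟩ ⟨j, w⟩ hne
    rcases eq_or_ne i j with rfl | hij
    · exact disjoint_starEdges_of_ne (fun hvw ↦ hne (Prod.ext rfl (Subtype.ext hvw))) (hA w i)
    · exact disjoint_starEdges_of_disjoint (hC hij) (hA w i)
  have hevent : {ω | ∀ i, ∀ v ∈ A, ∃ u ∈ C i, (erGraph n ω).Adj v u} =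
      {ω | ∀ x : ι × A, ∃ e ∈ starEdges x.2.1 (C x.1), ω e = true} := by
    simp only [exists_adj_iff_exists_mem_starEdges, Prod.forall, Subtype.forall]
  rw [hevent, erMeasure, pi_bernoulliBool_forall_exists_true hp hstars, Fintype.prod_prod_type]
  simp only [hcard, Finset.prod_const, Finset.card_univ, Fintype.card_coe]

end StarEdges

section UnionBound

/-- A vertex set `A` and color classes `C 0, …, C (d - 1)`, all pairwise disjoint, with at least `d`
vertices in `A` and at most `K` in each class: the possible witnesses over which the union bound
is taken. -/
def IsColorConfiguration {V : Type*} (d : ℕ) (K : ℝ) (A : Finset V)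
    (C : Fin d → Finset V) : Prop :=
  (∀ i, Disjoint A (C i)) ∧ Pairwise (Disjoint on C) ∧ d ≤ #A ∧ ∀ i, (#(C i) : ℝ) ≤ K

/-- Some `d` small color classes are eliminated at every vertex of a set `A` of size at least `d`:
since each vertex of `A` has a neighbor in every class, it can take none of these `d` colors. -/
def EliminatesColors {V : Type*} (G : SimpleGraph V) (d : ℕ) (K : ℝ) : Prop :=
  ∃ (A : Finset V) (C : Fin d → Finset V),
    IsColorConfiguration d K A C ∧ ∀ i, ∀ v ∈ A, ∃ u ∈ C i, G.Adj v u

open scoped Classical in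
lemma card_pairwise_disjoint_le (V ι : Type*) [Fintype V] [Fintype ι] [DecidableEq ι] :
    #{C : ι → Finset V | Pairwise (Disjoint on C)} ≤ (Fintype.card ι + 1) ^ Fintype.card V := by
  -- A disjoint family is the family of fibers of a partial map `V → ι`.
  have hsurj : Set.SurjOn (fun (g : V → Option ι) i ↦ ({v | g v = some i} : Finset V))
      (Finset.univ : Finset (V → Option ι))
      ({C : ι → Finset V | Pairwise (Disjoint on C)} : Finset _) := by
    intro C hC
    replace hC : Pairwise (Disjoint on C) := by simpa using hC
    refine ⟨fun v ↦ if h : ∃ i, v ∈ C i then some h.choose else none, by simp, ?_⟩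
    ext i v
    simp only [Finset.mem_filter, Finset.mem_univ, true_and, Option.dite_none_right_eq_some,
      Option.some_inj]
    refine ⟨fun ⟨h, hi⟩ ↦ hi ▸ h.choose_spec, fun hv ↦ ⟨⟨i, hv⟩, ?_⟩⟩
    have hex : ∃ j, v ∈ C j := ⟨i, hv⟩
    by_contra hne
    exact Finset.disjoint_left.1 (hC hne) hex.choose_spec hv
  simpa using Finset.card_le_card_of_surjOn _ hsurj

open scoped Classical in
lemma card_isColorConfiguration_le (V : Type*) [Fintype V] (d : ℕ) (K : ℝ) :
    #{x : Finset V × (Fin d → Finset V) | IsColorConfiguration d K x.1 x.2} ≤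
      (2 * (Fintype.card V + 1)) ^ Fintype.card V := by
  rcases le_or_gt d (Fintype.card V) with hd | hd
  · calc #{x : Finset V × (Fin d → Finset V) | IsColorConfiguration d K x.1 x.2}
      _ ≤ #((Finset.univ : Finset (Finset V)) ×ˢ
            ({C : Fin d → Finset V | Pairwise (Disjoint on C)} : Finset _)) :=
          Finset.card_le_card fun x hx ↦ by simpa using (Finset.mem_filter.1 hx).2.2.1
      _ ≤ 2 ^ Fintype.card V * (d + 1) ^ Fintype.card V := by
          rw [Finset.card_product, Finset.card_univ, Fintype.card_finset]
          gcongr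
          simpa using card_pairwise_disjoint_le V (Fin d)
      _ ≤ (2 * (Fintype.card V + 1)) ^ Fintype.card V := by
          rw [← mul_pow]
          gcongr
  · have hempty (x : Finset V × (Fin d → Finset V)) : ¬ IsColorConfiguration d K x.1 x.2 :=
      fun hx ↦ (hd.trans_le (hx.2.2.1.trans (Finset.card_le_univ _))).false
    simp [hempty]

lemma erMeasure_forall_exists_adj_le_exp {n d : ℕ} {K p : ℝ} (hp : p ∈ Set.Icc 0 1)
    {A : Finset (Fin n)} {C : Fin d → Finset (Fin n)} (h : IsColorConfiguration d K A C) :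
    erMeasure n p {ω | ∀ i, ∀ v ∈ A, ∃ u ∈ C i, (erGraph n ω).Adj v u} ≤
      ENNReal.ofReal (Real.exp (-((d : ℝ) ^ 2 * (1 - p) ^ K))) := by
  obtain ⟨hAC, hC, hA, hK⟩ := h
  have hq : 0 ≤ 1 - p := sub_nonneg.2 hp.2
  have hclass (i : Fin d) : 1 - (1 - p) ^ #(C i) ≤ Real.exp (-(1 - p) ^ K) := by
    have hpow : (1 - p) ^ K ≤ (1 - p) ^ #(C i) := by
      rw [← Real.rpow_natCast]
      exact Real.rpow_le_rpow_of_exponent_ge' hq (by linarith [hp.1]) (Nat.cast_nonneg _) (hK i)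
    linarith [Real.one_sub_le_exp_neg ((1 - p) ^ K)]
  calc erMeasure n p {ω | ∀ i, ∀ v ∈ A, ∃ u ∈ C i, (erGraph n ω).Adj v u}
    _ = ∏ i, ENNReal.ofReal (1 - (1 - p) ^ #(C i)) ^ #A := erMeasure_forall_exists_adj hp hAC hC
    _ ≤ ∏ _i : Fin d, ENNReal.ofReal (Real.exp (-(1 - p) ^ K)) ^ #A := by
        gcongr with i
        exact hclass i
    _ = ENNReal.ofReal (Real.exp (-(d * #A * (1 - p) ^ K))) := by
        rw [Finset.prod_const, Finset.card_univ, Fintype.card_fin, ← pow_mul,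
          ← ENNReal.ofReal_pow (Real.exp_nonneg _), ← Real.exp_nat_mul]
        push_cast
        ring_nf
    _ ≤ ENNReal.ofReal (Real.exp (-((d : ℝ) ^ 2 * (1 - p) ^ K))) := by
        rw [sq]
        gcongr

theorem erMeasure_eliminatesColors_le (n d : ℕ) (K : ℝ) {p : ℝ} (hp : p ∈ Set.Icc 0 1) :
    erMeasure n p {ω | EliminatesColors (erGraph n ω) d K} ≤
      ENNReal.ofReal ((2 * (n + 1)) ^ n * Real.exp (-((d : ℝ) ^ 2 * (1 - p) ^ K))) := by
  classical
  let configurations : Finset (Finset (Fin n) × (Fin d → Finset (Fin n))) :=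
    {x | IsColorConfiguration d K x.1 x.2}
  have hcover : {ω | EliminatesColors (erGraph n ω) d K} ⊆ ⋃ x ∈ configurations,
      {ω | ∀ i, ∀ v ∈ x.1, ∃ u ∈ x.2 i, (erGraph n ω).Adj v u} := by
    rintro ω ⟨A, C, hconf, hadj⟩
    exact Set.mem_biUnion (x := (A, C)) (by simpa [configurations] using hconf) hadj
  have hcard : #configurations ≤ (2 * (n + 1)) ^ n := by
    simpa using card_isColorConfiguration_le (Fin n) d K
  calc erMeasure n p {ω | EliminatesColors (erGraph n ω) d K}
    _ ≤ ∑ x ∈ configurations,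
          erMeasure n p {ω | ∀ i, ∀ v ∈ x.1, ∃ u ∈ x.2 i, (erGraph n ω).Adj v u} :=
        (measure_mono hcover).trans (measure_biUnion_finset_le _ _)
    _ ≤ #configurations • ENNReal.ofReal (Real.exp (-((d : ℝ) ^ 2 * (1 - p) ^ K))) :=
        Finset.sum_le_card_nsmul _ _ _ fun x hx ↦
          erMeasure_forall_exists_adj_le_exp hp (Finset.mem_filter.1 hx).2
    _ ≤ ENNReal.ofReal ((2 * (n + 1)) ^ n * Real.exp (-((d : ℝ) ^ 2 * (1 - p) ^ K))) := by
        rw [nsmul_eq_mul, ENNReal.ofReal_mul (by positivity), ← ENNReal.ofReal_natCast]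
        gcongr
        exact_mod_cast hcard

end UnionBound

section Asymptotics

lemma tendsto_pow_mul_exp_neg_of_isLittleO {f : ℕ → ℝ} (hf0 : ∀ᶠ n in atTop, 0 ≤ f n)
    (hf : (fun n : ℕ ↦ n * Real.log n) =o[atTop] f) :
    Tendsto (fun n : ℕ ↦ (2 * (n + 1) : ℝ) ^ n * Real.exp (-f n)) atTop (𝓝 0) := by
  have hnlog : Tendsto (fun n : ℕ ↦ n * Real.log n) atTop atTop :=
    tendsto_natCast_atTop_atTop.atTop_mul_atTop₀
      (Real.tendsto_log_atTop.comp tendsto_natCast_atTop_atTop)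
  refine squeeze_zero' (.of_forall fun n ↦ by positivity) ?_
    (Real.tendsto_exp_neg_atTop_nhds_zero.comp hnlog)
  filter_upwards [hf0, hf.def (show (0 : ℝ) < 1 / 4 by norm_num), eventually_ge_atTop 2]
    with n hfn hlog hn
  have hn2 : (2 : ℝ) ≤ n := by exact_mod_cast hn
  have hf4 : 4 * (n * Real.log n) ≤ f n := by
    rw [Real.norm_of_nonneg hfn] at hlog
    linarith [Real.le_norm_self (n * Real.log n)]
  have hpow : (2 * (n + 1) : ℝ) ^ n ≤ Real.exp (3 * (n * Real.log n)) := by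
    calc (2 * (n + 1) : ℝ) ^ n
      _ ≤ ((n : ℝ) ^ 3) ^ n := by
          gcongr
          nlinarith [mul_nonneg (sub_nonneg.2 hn2) (sq_nonneg (n : ℝ))]
      _ = Real.exp (3 * (n * Real.log n)) := by
          rw [← pow_mul, ← Real.rpow_natCast, Real.rpow_def_of_pos (by linarith)]
          push_cast
          ring_nf
  calc (2 * (n + 1) : ℝ) ^ n * Real.exp (-f n)
    _ ≤ Real.exp (3 * (n * Real.log n)) * Real.exp (-(4 * (n * Real.log n))) := by gcongr
    _ = Real.exp (-(n * Real.log n)) := by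
        rw [← Real.exp_add]
        ring_nf

theorem tendsto_erMeasure_eliminatesColors {p K : ℕ → ℝ} {d : ℕ → ℕ}
    (hp : ∀ᶠ n in atTop, p n ∈ Set.Icc 0 1)
    (hd : (fun n : ℕ ↦ n * Real.log n) =o[atTop] fun n ↦ (d n : ℝ) ^ 2 * (1 - p n) ^ K n) :
    Tendsto (fun n ↦ erMeasure n (p n) {ω | EliminatesColors (erGraph n ω) (d n) (K n)})
      atTop (𝓝 0) := by
  have hnonneg : ∀ᶠ n in atTop, 0 ≤ (d n : ℝ) ^ 2 * (1 - p n) ^ K n := by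
    filter_upwards [hp] with n hn
    have := sub_nonneg.2 hn.2
    positivity
  have hbound := ENNReal.tendsto_ofReal (tendsto_pow_mul_exp_neg_of_isLittleO hnonneg hd)
  rw [ENNReal.ofReal_zero] at hbound
  refine tendsto_of_tendsto_of_tendsto_of_le_of_le' tendsto_const_nhds hbound
    (.of_forall fun _ ↦ zero_le) ?_
  filter_upwards [hp] with n hn using erMeasure_eliminatesColors_le n (d n) (K n) hn

lemma isLittleO_mul_log_mul_rpow {p : ℕ → ℝ} {γ : ℝ} (hγ : 1 < γ)
    (hp : ∀ᶠ n in atTop, 0 < p n)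
    (hpbig : Tendsto (fun n ↦ Real.log (1 / p n) / Real.log n) atTop (𝓝 0)) :
    (fun n : ℕ ↦ n * Real.log n) =o[atTop] fun n ↦ (n * p n) ^ γ := by
  have hγ0 : 0 < γ := by linarith
  have hδ : 0 < (γ - 1) / (2 * γ) := div_pos (sub_pos.2 hγ) (mul_pos two_pos hγ0)
  have hlog : (fun n : ℕ ↦ Real.log n) =o[atTop] fun n : ℕ ↦ (n : ℝ) ^ ((γ - 1) / 2) :=
    (isLittleO_log_rpow_atTop (by linarith)).comp_tendsto tendsto_natCast_atTop_atTop
  have hnlog := (isBigO_refl (fun n : ℕ ↦ (n : ℝ)) atTop).mul_isLittleO hlog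
  refine hnlog.trans_isBigO (.of_norm_eventuallyLE ?_)
  filter_upwards [hp, hpbig.eventually_lt_const hδ, eventually_gt_atTop 1] with n hpn hsmall hn
  have hn1 : (1 : ℝ) < n := by exact_mod_cast hn
  have hn0 : (0 : ℝ) < n := by linarith
  have hlogp : -(γ * Real.log (p n)) ≤ (γ - 1) / 2 * Real.log n := by
    rw [div_lt_div_iff₀ (Real.log_pos hn1) (by positivity), one_div, Real.log_inv] at hsmall
    linarith
  calc ‖(n : ℝ) * (n : ℝ) ^ ((γ - 1) / 2)‖
    _ = Real.exp (Real.log n * (1 + (γ - 1) / 2)) := by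
        rw [Real.norm_of_nonneg (by positivity), ← Real.rpow_def_of_pos hn0, Real.rpow_add hn0,
          Real.rpow_one]
    _ ≤ Real.exp (Real.log (n * p n) * γ) := by
        rw [Real.log_mul hn0.ne' hpn.ne']
        refine Real.exp_le_exp.2 ?_
        linarith
    _ = (n * p n) ^ γ := (Real.rpow_def_of_pos (by positivity) γ).symm

lemma rpow_mul_log_div_log_inv {a x : ℝ} (ha0 : 0 < a) (ha1 : a ≠ 1) (hx : 0 < x) (κ : ℝ) :
    a ^ (κ * (Real.log x / Real.log (1 / a))) = x ^ (-κ) := by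
  have hlog : Real.log a ≠ 0 := Real.log_ne_zero_of_pos_of_ne_one ha0 ha1
  rw [Real.rpow_def_of_pos ha0, Real.rpow_def_of_pos hx, one_div, Real.log_inv]
  field_simp

theorem eliminated_colors_event_whp_general {p : ℕ → ℝ} {β κ : ℝ} (hβκ : 1 < 2 * β - κ)
    (hp : ∀ᶠ n in atTop, p n ∈ Set.Ioo 0 1)
    (hpbig : Tendsto (fun n ↦ Real.log (1 / p n) / Real.log n) atTop (𝓝 0)) :
    Tendsto (fun n ↦ erMeasure n (p n) {ω | EliminatesColors (erGraph n ω)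
      ⌈(n * p n) ^ β⌉₊ (κ * (Real.log (n * p n) / Real.log (1 / (1 - p n))))}) atTop (𝓝 0) := by
  refine tendsto_erMeasure_eliminatesColors (hp.mono fun _ hpn ↦ Set.Ioo_subset_Icc_self hpn) ?_
  refine (isLittleO_mul_log_mul_rpow hβκ (hp.mono fun _ hpn ↦ hpn.1) hpbig).trans_isBigO
    (.of_norm_eventuallyLE ?_)
  filter_upwards [hp, eventually_gt_atTop 0] with n ⟨hp0, hp1⟩ hn
  have hx : 0 < n * p n := by positivity
  calc ‖(n * p n) ^ (2 * β - κ)‖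
    _ = ((n * p n) ^ β) ^ 2 * (n * p n) ^ (-κ) := by
        rw [Real.norm_of_nonneg (by positivity), ← Real.rpow_mul_natCast hx.le, ← Real.rpow_add hx]
        push_cast
        ring_nf
    _ ≤ (⌈(n * p n) ^ β⌉₊ : ℝ) ^ 2 * (n * p n) ^ (-κ) := by
        gcongr
        exact Nat.le_ceil _
    _ = _ := by rw [rpow_mul_log_div_log_inv (by linarith) (by linarith) hx]

end Asymptotics

/-- Lemma 6 of Keusch–Steger. With `ξ = (1 - 1/α)/10` and
`d = ⌈(np)^{1-4ξ}⌉`, the probability that `G(n,p)` contains pairwise disjoint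
sets `A, C_1, …, C_d` with `|A| ≥ d`, `|C_i| ≤ (1/α + ξ)·log_b(np)`, and every
`v ∈ A` having a neighbor in every `C_i`, tends to `0`. -/
theorem eliminated_colors_event_whp
    (η : ℝ) (hη0 : 0 < η) (hη1 : η < 1)
    (α : ℝ) (hα : 1 < α) (ξ : ℝ) (hξ : ξ = (1 - 1 / α) / 10)
    (p : ℕ → ℝ) (hp0 : ∀ n, 0 < p n) (hp1 : ∀ n, p n ≤ 1 - η)
    (hpbig : Tendsto (fun n => Real.log (1 / p n) / Real.log n) atTop (nhds 0)) :
    Tendsto (fun n =>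
        erMeasure n (p n) {ω : EdgeIdx n → Bool |
          ∃ (A : Finset (Fin n))
            (C : Fin (⌈((n : ℝ) * p n) ^ (1 - 4 * ξ)⌉₊) → Finset (Fin n)),
            (∀ i, Disjoint A (C i)) ∧
            (∀ i j, i ≠ j → Disjoint (C i) (C j)) ∧
            ⌈((n : ℝ) * p n) ^ (1 - 4 * ξ)⌉₊ ≤ A.card ∧
            (∀ i, ((C i).card : ℝ) ≤
              (1 / α + ξ) * (Real.log (n * p n) / Real.log (1 / (1 - p n)))) ∧
            (∀ i, ∀ v ∈ A, ∃ u ∈ C i, (erGraph n ω).Adj v u)})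
      atTop (nhds 0) := by
  have hα' : 1 / α < 1 := (div_lt_one (by linarith)).2 hα
  simpa only [EliminatesColors, IsColorConfiguration, Pairwise, onFun, and_assoc] using
    eliminated_colors_event_whp_general (show 1 < 2 * (1 - 4 * ξ) - (1 / α + ξ) by linarith)
      (.of_forall fun n ↦ ⟨hp0 n, by linarith [hp1 n]⟩) hpbig
end

section
/- Let η ∈ (0,1) and α > 1 be constants, set ξ := (1 − 1/α)/10, and let p : ℕ → ℝ satisfy 0 < p(n) ≤ 1 − η and log(1/p(n))/log n → 0. Then for all sufficiently large n, (α·n/log_b(np) − ⌈(n·p(n))^{1−4ξ}⌉) · (1/α + ξ) · log_b(np) > n, where b := 1/(1 − p(n)) and log_b(np) := log(n·p(n))/log b. -/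
open Filter

/-!
Write `x = np` and `L = log_b x`, where `b = 1 / (1 - p)`. The right-hand side equals
`(αn - ⌈x ^ (1 - 4ξ)⌉ L) (1/α + ξ)`, and `α (1/α + ξ) = 1 + αξ > 1`, so it suffices that
`⌈x ^ (1 - 4ξ)⌉ L = o(n)`. Since `log b ≥ p`, we have `L ≤ log x / p`. The hypothesis on `p` says
`log x = (1 - o(1)) log n`, so `x → ∞` and `⌈x ^ (1 - 4ξ)⌉ log x = o(x)`; dividing by `p` turns
`o(x)` into `o(n)`.
-/

open Asymptotics Topology

lemma isLittleO_natCeil_rpow_one_sub_mul_log_id_atTop {δ : ℝ} (hδ : 0 < δ) :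
    (fun x : ℝ => (⌈x ^ (1 - δ)⌉₊ : ℝ) * Real.log x) =o[atTop] id := by
  have hpow : (fun x : ℝ => x ^ (1 - δ) * Real.log x) =o[atTop] id := by
    refine ((isBigO_refl (fun x : ℝ => x ^ (1 - δ)) atTop).mul_isLittleO
      (isLittleO_log_rpow_atTop hδ)).congr' .rfl ?_
    filter_upwards [eventually_gt_atTop 0] with x hx
    rw [← Real.rpow_add hx, sub_add_cancel, Real.rpow_one, id]
  have hsum : (fun x : ℝ => (x ^ (1 - δ) + 1) * Real.log x) =o[atTop] id := by
    simpa only [add_mul, one_mul] using hpow.add Real.isLittleO_log_id_atTop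
  refine IsBigO.trans_isLittleO (.of_norm_eventuallyLE ?_) hsum
  filter_upwards [eventually_ge_atTop 1] with x hx
  have hlog : 0 ≤ Real.log x := Real.log_nonneg hx
  rw [Real.norm_of_nonneg (by positivity)]
  gcongr
  exact (Nat.ceil_lt_add_one (by positivity)).le

lemma one_lt_one_div_one_sub {q : ℝ} (hq : q ∈ Set.Ioo 0 1) : 1 < 1 / (1 - q) :=
  one_lt_one_div (sub_pos.2 hq.2) (sub_lt_self 1 hq.1)

lemma logb_one_div_one_sub_le_log_div {q x : ℝ} (hq : q ∈ Set.Ioo 0 1) (hx : 1 ≤ x) :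
    Real.logb (1 / (1 - q)) x ≤ Real.log x / q := by
  have hle : q ≤ Real.log (1 / (1 - q)) := by
    rw [one_div, Real.log_inv]
    linarith [Real.log_le_sub_one_of_pos (sub_pos.2 hq.2)]
  exact div_le_div_of_nonneg_left (Real.log_nonneg hx) hq.1 hle

section

variable {ι : Type*} {l : Filter ι} {N p : ι → ℝ}

lemma isLittleO_natCeil_rpow_one_sub_mul_logb {δ : ℝ} (hδ : 0 < δ)
    (hp : ∀ᶠ i in l, p i ∈ Set.Ioo 0 1) (hNp : Tendsto (fun i => N i * p i) l atTop) :
    (fun i => (⌈(N i * p i) ^ (1 - δ)⌉₊ : ℝ) * Real.logb (1 / (1 - p i)) (N i * p i)) =o[l] N := by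
  have hlogb : (fun i => Real.logb (1 / (1 - p i)) (N i * p i)) =O[l]
      fun i => Real.log (N i * p i) * (p i)⁻¹ := by
    refine .of_norm_eventuallyLE ?_
    filter_upwards [hp, hNp.eventually_ge_atTop 1] with i hpi hxi
    rw [Real.norm_of_nonneg (Real.logb_nonneg (one_lt_one_div_one_sub hpi) hxi), ← div_eq_mul_inv]
    exact logb_one_div_one_sub_le_log_div hpi hxi
  have hlog : (fun i => (⌈(N i * p i) ^ (1 - δ)⌉₊ : ℝ) * Real.log (N i * p i) * (p i)⁻¹) =o[l]
      fun i => N i * p i * (p i)⁻¹ :=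
    ((isLittleO_natCeil_rpow_one_sub_mul_log_id_atTop hδ).comp_tendsto hNp).mul_isBigO
      (isBigO_refl _ l)
  refine ((isBigO_refl _ l).mul hlogb).trans_isLittleO (hlog.congr' ?_ ?_)
  · exact .of_forall fun i => mul_assoc _ _ _
  · filter_upwards [hp] with i hpi using mul_inv_cancel_right₀ hpi.1.ne' (N i)

lemma tendsto_mul_atTop_of_tendsto_log_one_div_div_log {c : ℝ} (hc : c < 1)
    (hp : ∀ᶠ i in l, 0 < p i) (hN : Tendsto N l atTop)
    (h : Tendsto (fun i => Real.log (1 / p i) / Real.log (N i)) l (𝓝 c)) :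
    Tendsto (fun i => N i * p i) l atTop := by
  have hlog : Tendsto (fun i => (1 - Real.log (1 / p i) / Real.log (N i)) * Real.log (N i))
      l atTop :=
    (h.const_sub 1).pos_mul_atTop (sub_pos.2 hc) (Real.tendsto_log_atTop.comp hN)
  refine (Real.tendsto_exp_atTop.comp hlog).congr' ?_
  filter_upwards [hp, hN.eventually_gt_atTop 1] with i hpi hNi
  have hNi0 : 0 < N i := one_pos.trans hNi
  rw [Function.comp_apply, sub_mul, one_mul, div_mul_cancel₀ _ (Real.log_pos hNi).ne', one_div,
    Real.log_inv, sub_neg_eq_add, Real.exp_add, Real.exp_log hNi0, Real.exp_log hpi]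

theorem level_bound_counting_inequality_general {α β δ : ℝ} (hβ : 0 < β) (hαβ : 1 < α * β)
    (hδ : 0 < δ) (hp : ∀ᶠ i in l, p i ∈ Set.Ioo 0 1)
    (hNp : Tendsto (fun i => N i * p i) l atTop) :
    ∀ᶠ i in l, N i < (α * N i / Real.logb (1 / (1 - p i)) (N i * p i) -
      (⌈(N i * p i) ^ (1 - δ)⌉₊ : ℝ)) * β * Real.logb (1 / (1 - p i)) (N i * p i) := by
  have hgap : 0 < α - 1 / β := sub_pos.2 ((div_lt_iff₀ hβ).2 hαβ)
  filter_upwards [hp, hNp.eventually_gt_atTop 1,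
    (isLittleO_natCeil_rpow_one_sub_mul_logb hδ hp hNp).tendsto_div_nhds_zero.eventually_lt_const
      hgap] with i hpi hxi hsmall
  have hN : 0 < N i := pos_of_mul_pos_left (one_pos.trans hxi) hpi.1.le
  have hL : 0 < Real.logb (1 / (1 - p i)) (N i * p i) :=
    Real.logb_pos (one_lt_one_div_one_sub hpi) hxi
  generalize Real.logb (1 / (1 - p i)) (N i * p i) = L at *
  generalize (⌈(N i * p i) ^ (1 - δ)⌉₊ : ℝ) = C at *
  have hCL : C * L < (α - 1 / β) * N i := (div_lt_iff₀ hN).1 hsmall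
  calc N i = (α * N i - (α - 1 / β) * N i) * β := by field_simp; ring
    _ < (α * N i - C * L) * β := by gcongr
    _ = (α * N i / L - C) * β * L := by field_simp

end

/-- the counting inequality in Corollary 7 of Keusch–Steger.
With `ξ = (1 - 1/α)/10`, for all sufficiently large `n`,
`(α·n/log_b(np) - ⌈(np)^{1-4ξ}⌉) · (1/α + ξ) · log_b(np) > n`. -/
theorem level_bound_counting_inequality
    (η : ℝ) (hη0 : 0 < η) (hη1 : η < 1)
    (α : ℝ) (hα : 1 < α) (ξ : ℝ) (hξ : ξ = (1 - 1 / α) / 10)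
    (p : ℕ → ℝ) (hp0 : ∀ n, 0 < p n) (hp1 : ∀ n, p n ≤ 1 - η)
    (hpbig : Tendsto (fun n => Real.log (1 / p n) / Real.log n) atTop (nhds 0)) :
    ∀ᶠ n : ℕ in atTop,
      (n : ℝ) <
        (α * n / (Real.log (n * p n) / Real.log (1 / (1 - p n))) -
            (⌈((n : ℝ) * p n) ^ (1 - 4 * ξ)⌉₊ : ℝ)) *
          (1 / α + ξ) * (Real.log (n * p n) / Real.log (1 / (1 - p n))) := by
  have hα0 : 0 < α := one_pos.trans hα
  have hξ0 : 0 < ξ := by rw [hξ]; linarith [(div_lt_one hα0).2 hα]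
  have hαβ : 1 < α * (1 / α + ξ) := by
    rw [mul_add, mul_one_div_cancel hα0.ne']
    exact lt_add_of_pos_right 1 (mul_pos hα0 hξ0)
  exact level_bound_counting_inequality_general (by positivity) hαβ (by positivity)
    (.of_forall fun n => ⟨hp0 n, (hp1 n).trans_lt (sub_lt_self 1 hη0)⟩)
    (tendsto_mul_atTop_of_tendsto_log_one_div_div_log one_pos (.of_forall hp0)
      tendsto_natCast_atTop_atTop hpbig)
end

section
/- Let ξ ∈ (0,1) be a real number, let a ≥ 2 be an integer with ((1−ξ)·a + 1)/(a − 1) ≤ 1 − ξ/2, let N be a real number with N ≥ 8/ξ, let k ≥ 0 be a real number, let ℓ' be a real number with 1 ≤ ℓ' ≤ (1−ξ)·a + 1 and ℓ' ≤ a − 1, and let C be a real number with C ≤ k·ℓ'·(N+1)·(a−ℓ')/((N−1)·(a−1)). Then k − C/(a − ℓ') − (ξ/8)·k ≥ (ξ/8)·k. In particular, (N+1)/(N−1)·(1 − ξ/2) ≤ 1 − ξ/4 whenever N ≥ 8/ξ. -/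
/-!
A bin is lost only after receiving `a - ℓ` of the `C` balls, so at most `C / (a - ℓ)` bins are lost.
By the bound on `C` this is at most a fraction `(N + 1) / (N - 1) * (ℓ / (a - 1))` of the `k` bins.
As `ℓ / (a - 1) ≤ 1 - ξ / 2`, and the factor `(N + 1) / (N - 1)` costs no more than another `ξ / 4`
once `N` is of order `8 / ξ`, a fraction `ξ / 4` of the bins is not lost in this way, and the
removals take at most half of it.
-/

section OrderedField

variable {K : Type*} [Field K] [LinearOrder K] [IsStrictOrderedRing K]

theorem add_one_div_sub_one_mul_le_iff {ξ N : K} (hξ : 0 < ξ) (hN : 1 < N) :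
    (N + 1) / (N - 1) * (1 - ξ / 2) ≤ 1 - ξ / 4 ↔ 8 / ξ ≤ N + 3 := by
  have gap : (1 - ξ / 4) * (N - 1) - (N + 1) * (1 - ξ / 2) = ((N + 3) * ξ - 8) / 4 := by ring
  rw [div_mul_eq_mul_div, div_le_iff₀ (sub_pos.2 hN), div_le_iff₀ hξ, ← sub_nonneg, gap]
  constructor <;> intro h <;> linarith

theorem lost_bins_le {a N k ℓ C : K} (hℓ : ℓ < a)
    (hC : C ≤ k * ℓ * (N + 1) * (a - ℓ) / ((N - 1) * (a - 1))) :
    C / (a - ℓ) ≤ k * ((N + 1) / (N - 1) * (ℓ / (a - 1))) := by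
  rw [div_le_iff₀ (sub_pos.2 hℓ)]
  refine hC.trans_eq ?_
  rw [div_mul_div_comm]
  ring

theorem balls_and_bins_corollary_arithmetic_general {ξ a N k ℓ C : K} (hξ : 0 < ξ) (ha : 1 < a)
    (hN₁ : 1 < N) (hN : 8 / ξ ≤ N + 3) (hk : 0 ≤ k) (hℓ : ℓ / (a - 1) ≤ 1 - ξ / 2)
    (hC : C ≤ k * ℓ * (N + 1) * (a - ℓ) / ((N - 1) * (a - 1))) :
    ξ / 8 * k ≤ k - C / (a - ℓ) - ξ / 8 * k ∧
      (N + 1) / (N - 1) * (1 - ξ / 2) ≤ 1 - ξ / 4 := by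
  have ratio_le : (N + 1) / (N - 1) * (1 - ξ / 2) ≤ 1 - ξ / 4 :=
    (add_one_div_sub_one_mul_le_iff hξ hN₁).2 hN
  refine ⟨?_, ratio_le⟩
  have ratio_nonneg : 0 ≤ (N + 1) / (N - 1) := div_nonneg (by linarith) (by linarith)
  have ℓ_lt : ℓ < a := by
    have : ℓ < a - 1 := (div_lt_one (sub_pos.2 ha)).1 (by linarith)
    linarith
  have lost_le : C / (a - ℓ) ≤ k * (1 - ξ / 4) :=
    calc C / (a - ℓ) ≤ k * ((N + 1) / (N - 1) * (ℓ / (a - 1))) := lost_bins_le ℓ_lt hC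
      _ ≤ k * ((N + 1) / (N - 1) * (1 - ξ / 2)) :=
        mul_le_mul_of_nonneg_left (mul_le_mul_of_nonneg_left hℓ ratio_nonneg) hk
      _ ≤ k * (1 - ξ / 4) := mul_le_mul_of_nonneg_left ratio_le hk
  linarith

end OrderedField

/-- the arithmetic core of Corollary 9 of Keusch–Steger.
Under the stated conditions on `ξ, a, N, k, ℓ', C`, the number of surviving
bins with load at most `a` is at least
`k - C/(a-ℓ') - (ξ/8)·k ≥ (ξ/8)·k`; in particular
`(N+1)/(N-1)·(1-ξ/2) ≤ 1-ξ/4` whenever `N ≥ 8/ξ`. -/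
theorem balls_and_bins_corollary_arithmetic
    (ξ : ℝ) (hξ0 : 0 < ξ) (hξ1 : ξ < 1)
    (a : ℕ) (ha : 2 ≤ a)
    (ha2 : ((1 - ξ) * (a : ℝ) + 1) / ((a : ℝ) - 1) ≤ 1 - ξ / 2)
    (N : ℝ) (hN : 8 / ξ ≤ N)
    (k : ℝ) (hk : 0 ≤ k)
    (ℓ' : ℝ) (hℓ1 : 1 ≤ ℓ') (hℓ2 : ℓ' ≤ (1 - ξ) * (a : ℝ) + 1) (hℓ3 : ℓ' ≤ (a : ℝ) - 1)
    (C : ℝ) (hC : C ≤ k * ℓ' * (N + 1) * ((a : ℝ) - ℓ') / ((N - 1) * ((a : ℝ) - 1))) :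
    (ξ / 8) * k ≤ k - C / ((a : ℝ) - ℓ') - (ξ / 8) * k ∧
      (N + 1) / (N - 1) * (1 - ξ / 2) ≤ 1 - ξ / 4 := by
  have ha₁ : 1 < (a : ℝ) := Nat.one_lt_cast.2 ha
  exact balls_and_bins_corollary_arithmetic_general hξ0 ha₁
    (((one_lt_div hξ0).2 (by linarith)).trans_le hN) (by linarith) hk
    ((div_le_div_of_nonneg_right hℓ2 (sub_pos.2 ha₁).le).trans ha2) hC
end
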